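/- Let L1 and L2 be propositional bimodal logics with operators □_1, □_E and □_2, □_E respectively, each containing the S5 axioms for the shared □_E and each admitting E-homogeneous models. For every formula φ of the combined language and each i ∈ {1,2} with adp(φ) = adp^i(φ), the following are equivalent: (i) ⊬_{L1 ⊗_E L2} φ; (ii) there is a model based on a frame for L1 ⊗_E L2 in which φ fails at some world; (iii) ⊬_{L_i} □_{i,E}^{≤ md^i(φ)} (Q̂_i(φ))^i → φ^i, where Q_i(φ) is the set of all Θ^i(φ)-quasistates q such that ⊬_{L1 ⊗_E L2} ¬q̂. -/

import Mathlib

namespace PropML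

/-- propositional modal formulas over modal signature `M` -/
inductive PF (M : Type) : Type
  | atom : ℕ → PF M
  | neg : PF M → PF M
  | and : PF M → PF M → PF M
  | box : M → PF M → PF M
  deriving DecidableEq

namespace PF

variable {M M' : Type}

def imp (φ ψ : PF M) : PF M := .neg (.and φ (.neg ψ))

def or (φ ψ : PF M) : PF M := .neg (.and (.neg φ) (.neg ψ))

def dia (m : M) (φ : PF M) : PF M := .neg (.box m (.neg φ))

/-- `⊥` -/
def bot : PF M := .and (.atom 0) (.neg (.atom 0))

/-- renaming of modal operators -/
def mapOp (f : M → M') : PF M → PF M'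
  | atom n => atom n
  | neg φ => neg (mapOp f φ)
  | and φ ψ => and (mapOp f φ) (mapOp f ψ)
  | box m φ => box (f m) (mapOp f φ)

/-- uniform substitution -/
def substP (σ : ℕ → PF M) : PF M → PF M
  | atom n => σ n
  | neg φ => neg (substP σ φ)
  | and φ ψ => and (substP σ φ) (substP σ ψ)
  | box m φ => box m (substP σ φ)

end PF

/-- evaluation treating atoms and boxed formulas as atomic; used to define
the classical tautologies of the modal language -/
def tautEval {M : Type} (v : PF M → Prop) : PF M → Prop
  | .atom n => v (.atom n)
  | .neg φ => ¬ tautEval v φ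
  | .and φ ψ => tautEval v φ ∧ tautEval v ψ
  | .box m φ => v (.box m φ)

/-- classical tautologies of the propositional modal language -/
def IsTaut {M : Type} (φ : PF M) : Prop := ∀ v, tautEval v φ

/-- a (normal) propositional modal `M`-logic -/
structure IsPLogic {M : Type} (L : Set (PF M)) : Prop where
  taut : ∀ φ, IsTaut φ → φ ∈ L
  kax : ∀ (m : M) (n k : ℕ),
    PF.imp (.box m (PF.imp (.atom n) (.atom k)))
      (PF.imp (.box m (.atom n)) (.box m (.atom k))) ∈ L
  mp : ∀ φ ψ, PF.imp φ ψ ∈ L → φ ∈ L → ψ ∈ L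
  nec : ∀ m φ, φ ∈ L → PF.box m φ ∈ L
  subst : ∀ (σ : ℕ → PF M) φ, φ ∈ L → PF.substP σ φ ∈ L

/-- A Kripke `M`-frame. -/
structure KFrame (M : Type) where
  W : Type
  ne : Nonempty W
  R : M → W → W → Prop

/-- truth of a propositional formula in a Kripke model `(F, V)` -/
def PVal {M : Type} {F : KFrame M} (V : ℕ → F.W → Prop) : PF M → F.W → Prop
  | .atom n, w => V n w
  | .neg φ, w => ¬ PVal V φ w
  | .and φ ψ, w => PVal V φ w ∧ PVal V ψ w
  | .box m φ, w => ∀ v, F.R m w v → PVal V φ v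

/-- validity of a propositional formula on a frame -/
def PValid {M : Type} (F : KFrame M) (φ : PF M) : Prop :=
  ∀ (V : ℕ → F.W → Prop) (w : F.W), PVal (F := F) V φ w

/-- `F` is a frame for the logic `L` -/
def FrameFor {M : Type} (F : KFrame M) (L : Set (PF M)) : Prop :=
  ∀ φ ∈ L, PValid F φ

/-- `L` is Kripke complete -/
def KComplete {M : Type} (L : Set (PF M)) : Prop :=
  ∀ φ, (∀ F : KFrame M, FrameFor F L → PValid F φ) → φ ∈ L

/-- global consequence `φ ⊢*_L ψ`: `ψ` is in the smallest set including
`L ∪ {φ}` closed under Modus Ponens and Necessitation -/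
inductive PGlobal {M : Type} (L : Set (PF M)) (φ : PF M) : PF M → Prop
  | ax {ψ} : ψ ∈ L → PGlobal L φ ψ
  | prem : PGlobal L φ φ
  | mp {ψ χ} : PGlobal L φ (PF.imp ψ χ) → PGlobal L φ ψ → PGlobal L φ χ
  | nec (m : M) {ψ} : PGlobal L φ ψ → PGlobal L φ (PF.box m ψ)

/-- `L` is globally Kripke complete -/
def GloballyKComplete {M : Type} (L : Set (PF M)) : Prop :=
  ∀ φ ψ, PGlobal L φ ψ ↔
    ∀ F : KFrame M, FrameFor F L → ∀ V : ℕ → F.W → Prop,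
      (∀ w, PVal (F := F) V φ w) → ∀ w, PVal (F := F) V ψ w

/-- the S5 axioms for the operator `e` -/
def ContainsS5 {M : Type} (L : Set (PF M)) (e : M) : Prop :=
  PF.imp (.box e (.atom 0)) (.atom 0) ∈ L ∧
  PF.imp (.box e (.atom 0)) (.box e (.box e (.atom 0))) ∈ L ∧
  PF.imp (PF.dia e (.atom 0)) (.box e (PF.dia e (.atom 0))) ∈ L

/-- an `(E, κ)`-homogeneous model: in each `E`-equivalence class, each formula
is satisfied either nowhere or at exactly `κ` worlds -/
def EHomog {M : Type} {F : KFrame M} (e : M) (V : ℕ → F.W → Prop)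
    (κ : Cardinal) : Prop :=
  ∀ (w : F.W) (φ : PF M),
    Cardinal.mk {v : F.W // F.R e w v ∧ PVal (F := F) V φ v} = 0 ∨
    Cardinal.mk {v : F.W // F.R e w v ∧ PVal (F := F) V φ v} = κ

/-- `L` admits `E`-homogeneous models -/
def AdmitsEHomog {M : Type} (e : M) (L : Set (PF M)) : Prop :=
  ∃ κ : Cardinal, Cardinal.aleph0 ≤ κ ∧ ∀ κ', κ ≤ κ' → ∀ φ ∉ L,
    ∃ F : KFrame M, FrameFor F L ∧ ∃ V : ℕ → F.W → Prop,
      EHomog e V κ' ∧ ∃ w, ¬ PVal (F := F) V φ w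

/-- `L` admits `E`-homogeneous models for global consequence -/
def AdmitsEHomogGlobal {M : Type} (e : M) (L : Set (PF M)) : Prop :=
  ∃ κ : Cardinal, Cardinal.aleph0 ≤ κ ∧ ∀ κ', κ ≤ κ' → ∀ φ ψ, ¬ PGlobal L φ ψ →
    ∃ F : KFrame M, FrameFor F L ∧ ∃ V : ℕ → F.W → Prop,
      EHomog e V κ' ∧ (∀ w, PVal (F := F) V φ w) ∧ ∃ w, ¬ PVal (F := F) V ψ w

/-- the fusion `L1 ⊗_E L2` of two logics sharing the S5 operator `□_E`
(designated by `none` in each component signature): the smallest propositional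
modal logic in the combined language (with the single shared `□_E`) including
`L1 ∪ L2` -/
def fusionE {M1 M2 : Type} (L1 : Set (PF (Option M1))) (L2 : Set (PF (Option M2))) :
    Set (PF (Option (M1 ⊕ M2))) :=
  ⋂₀ {L | IsPLogic L ∧
    PF.mapOp (Option.map Sum.inl) '' L1 ⊆ L ∧
    PF.mapOp (Option.map Sum.inr) '' L2 ⊆ L}

/-- the propositional modal logic `S5` (of the single operator `□_E`) -/
def S5L : Set (PF Unit) := ⋂₀ {L | IsPLogic L ∧ ContainsS5 L ()}

/-- the left commutativity axiom `□□_E p → □_E □ p` -/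
def lcom {M : Type} (m : M) : PF (Option M) :=
  PF.imp (.box (some m) (.box none (.atom 0))) (.box none (.box (some m) (.atom 0)))

/-- the right commutativity axiom `□_E □ p → □ □_E p` -/
def rcom {M : Type} (m : M) : PF (Option M) :=
  PF.imp (.box none (.box (some m) (.atom 0))) (.box (some m) (.box none (.atom 0)))

/-- the semicommutator `[L, S5]^xd = L ⊗ S5 + {lcom_□ : □ ∈ M}`
(`□_E` is `none`) -/
def LS5xd {M : Type} (L : Set (PF M)) : Set (PF (Option M)) :=
  ⋂₀ {L' | IsPLogic L' ∧
    PF.mapOp Option.some '' L ⊆ L' ∧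
    PF.mapOp (fun _ => (none : Option M)) '' S5L ⊆ L' ∧
    ∀ m : M, lcom m ∈ L'}

/-- the commutator `[L, S5]^cd = [L, S5]^xd + {rcom_□ : □ ∈ M}` -/
def LS5cd {M : Type} (L : Set (PF M)) : Set (PF (Option M)) :=
  ⋂₀ {L' | IsPLogic L' ∧ LS5xd L ⊆ L' ∧ ∀ m : M, rcom m ∈ L'}

/-- the two domain semantics: expanding (`xd`) and constant (`cd`) domains -/
inductive DSem : Type
  | xd | cd
  deriving DecidableEq

/-- `[L, S5]^d` -/
def LS5 {M : Type} (d : DSem) (L : Set (PF M)) : Set (PF (Option M)) :=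
  match d with
  | .xd => LS5xd L
  | .cd => LS5cd L

/-- the fixed Gödel numbering of propositional formulas (relative to a
numbering `eM` of the modal operators) -/
def PF.encode {M : Type} (eM : M → ℕ) : PF M → ℕ
  | .atom n => Nat.pair 0 n
  | .neg φ => Nat.pair 1 (PF.encode eM φ)
  | .and φ ψ => Nat.pair 2 (Nat.pair (PF.encode eM φ) (PF.encode eM ψ))
  | .box m φ => Nat.pair 3 (Nat.pair (eM m) (PF.encode eM φ))

/-- decidability of a propositional logic w.r.t. the fixed Gödel numbering -/
def DecidableP {M : Type} (eM : M → ℕ) (L : Set (PF M)) : Prop :=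
  ComputablePred (fun n : ℕ => ∃ φ ∈ L, PF.encode eM φ = n)

/-- decidability of the global consequence relation -/
def GloballyDecidableP {M : Type} (eM : M → ℕ) (L : Set (PF M)) : Prop :=
  ComputablePred (fun p : ℕ × ℕ =>
    ∃ φ ψ, PGlobal L φ ψ ∧ PF.encode eM φ = p.1 ∧ PF.encode eM ψ = p.2)

end PropML

namespace PropML

/-- the component signature: `some ()` is the proper operator, `none` is `□_E` -/
abbrev OU : Type := Option Unit

/-- the combined signature: `some (Sum.inl ())` is `□₁`, `some (Sum.inr ())`
is `□₂`, and `none` is the shared `□_E` -/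
abbrev OC : Type := Option (Unit ⊕ Unit)

namespace PF

variable {M : Type}

/-- the set of subformulas -/
def sub [DecidableEq M] : PF M → Finset (PF M)
  | atom n => {atom n}
  | neg φ => insert (neg φ) φ.sub
  | and φ ψ => insert (and φ ψ) (φ.sub ∪ ψ.sub)
  | box m φ => insert (box m φ) φ.sub

/-- indices of the proposition letters occurring in a formula -/
def atoms : PF M → Finset ℕ
  | atom n => {n}
  | neg φ => φ.atoms
  | and φ ψ => φ.atoms ∪ ψ.atoms
  | box _ φ => φ.atoms

end PF

/-- finite conjunction (`⊤` for the empty list) -/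
def bigAndP {M : Type} : List (PF M) → PF M
  | [] => PF.imp (.atom 0) (.atom 0)
  | φ :: l => List.foldl PF.and φ l

/-- finite disjunction -/
def bigOrP {M : Type} (l : List (PF M)) : PF M := PF.neg (bigAndP (l.map PF.neg))

/-- a `Φ`-type: a maximal Boolean-consistent subset of `{ψ, ¬ψ ∣ ψ ∈ Φ}` -/
def IsTypeP {M : Type} [DecidableEq M] (Φ t : Finset (PF M)) : Prop :=
  (∀ χ ∈ t, χ ∈ Φ ∨ ∃ ψ ∈ Φ, χ = PF.neg ψ) ∧
  (∀ ψ ∈ Φ, (PF.neg ψ ∈ t ↔ ψ ∉ t)) ∧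
  (∀ ψ₁ ψ₂, PF.and ψ₁ ψ₂ ∈ Φ → (PF.and ψ₁ ψ₂ ∈ t ↔ ψ₁ ∈ t ∧ ψ₂ ∈ t))

/-- a `Φ`-quasistate: a non-empty set of `Φ`-types saturated for `◇_E` -/
def IsQuasistateP {M : Type} [DecidableEq M] (eOp : M) (Φ : Finset (PF M))
    (q : Finset (Finset (PF M))) : Prop :=
  q.Nonempty ∧ (∀ t ∈ q, IsTypeP Φ t) ∧
  ∀ ψ, PF.box eOp (PF.neg ψ) ∈ Φ → ∀ t ∈ q,
    (PF.neg (PF.box eOp (PF.neg ψ)) ∈ t ↔ ∃ t' ∈ q, ψ ∈ t')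

/-- the conjunction of the formulas in the type `t` -/
noncomputable def typeConjP {M : Type} (t : Finset (PF M)) : PF M := bigAndP t.toList

/-- the realisability formula `q̂ = □_E ⋁_{t∈q} t ∧ ⋀_{t∈q} ◇_E t` -/
noncomputable def qhatP {M : Type} (eOp : M) (q : Finset (Finset (PF M))) : PF M :=
  PF.and (PF.box eOp (bigOrP (q.toList.map typeConjP)))
    (bigAndP (q.toList.map (fun t => PF.dia eOp (typeConjP t))))

/-- `Q̂ = ⋁_{q ∈ Q} q̂` -/
noncomputable def QhatP {M : Type} (eOp : M) (Q : Finset (Finset (Finset (PF M)))) :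
    PF M :=
  bigOrP (Q.toList.map (qhatP eOp))

/-- the surrogate translation `·¹` into the language of the first component:
maximal subformulas `□₂ψ` are replaced by the fresh surrogate letter given
by `s` -/
def sur1P (s : PF OC → ℕ) : PF OC → PF OU
  | .atom n => .atom n
  | .neg φ => .neg (sur1P s φ)
  | .and φ ψ => .and (sur1P s φ) (sur1P s ψ)
  | .box none φ => .box none (sur1P s φ)
  | .box (some (Sum.inl _)) φ => .box (some ()) (sur1P s φ)
  | .box (some (Sum.inr _)) φ => .atom (s (.box (some (Sum.inr ())) φ))

/-- the surrogate translation `·²` into the language of the second component -/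
def sur2P (s : PF OC → ℕ) : PF OC → PF OU
  | .atom n => .atom n
  | .neg φ => .neg (sur2P s φ)
  | .and φ ψ => .and (sur2P s φ) (sur2P s ψ)
  | .box none φ => .box none (sur2P s φ)
  | .box (some (Sum.inr _)) φ => .box (some ()) (sur2P s φ)
  | .box (some (Sum.inl _)) φ => .atom (s (.box (some (Sum.inl ())) φ))

/-- `Θ¹(φ)`: the proposition letters of `φ` together with all subformulas of
`□₂`-subformulas -/
def Theta1P (φ : PF OC) : Finset (PF OC) :=
  φ.sub.filter (fun χ => (match χ with | .atom _ => true | _ => false) = true) ∪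
  (φ.sub.filter
    (fun χ => (match χ with | .box (some (Sum.inr _)) _ => true | _ => false) = true)).biUnion
    PF.sub

/-- `Θ²(φ)` -/
def Theta2P (φ : PF OC) : Finset (PF OC) :=
  φ.sub.filter (fun χ => (match χ with | .atom _ => true | _ => false) = true) ∪
  (φ.sub.filter
    (fun χ => (match χ with | .box (some (Sum.inl _)) _ => true | _ => false) = true)).biUnion
    PF.sub

/-- the modal `1`-depth: maximal nesting of `□₁`, ignoring `□₂` and `□_E` -/
def md1P : PF OC → ℕ
  | .atom _ => 0
  | .neg φ => md1P φ
  | .and φ ψ => max (md1P φ) (md1P ψ)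
  | .box none φ => md1P φ
  | .box (some (Sum.inl _)) φ => md1P φ + 1
  | .box (some (Sum.inr _)) φ => md1P φ

/-- the modal `2`-depth -/
def md2P : PF OC → ℕ
  | .atom _ => 0
  | .neg φ => md2P φ
  | .and φ ψ => max (md2P φ) (md2P ψ)
  | .box none φ => md2P φ
  | .box (some (Sum.inl _)) φ => md2P φ
  | .box (some (Sum.inr _)) φ => md2P φ + 1

/-- the pair `(adp¹(φ), adp²(φ))` of alternation depths: `adp¹(φ)` is the
least number of alternating applications of the restoring operations
`·⁻¹, ·⁻², …` needed to recover `φ` from `φ¹`, i.e. the maximal number of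
alternations between `□₁` and `□₂` in `φ` starting from `□₁`; symmetrically
for `adp²`. -/
def adpPairP : PF OC → ℕ × ℕ
  | .atom _ => (0, 0)
  | .neg φ => adpPairP φ
  | .and φ ψ => (max (adpPairP φ).1 (adpPairP ψ).1, max (adpPairP φ).2 (adpPairP ψ).2)
  | .box none φ => adpPairP φ
  | .box (some (Sum.inl _)) φ => ((adpPairP φ).1, (adpPairP φ).1 + 1)
  | .box (some (Sum.inr _)) φ => ((adpPairP φ).2 + 1, (adpPairP φ).2)

/-- `adp¹(φ)` -/
def adp1P (φ : PF OC) : ℕ := (adpPairP φ).1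

/-- `adp²(φ)` -/
def adp2P (φ : PF OC) : ℕ := (adpPairP φ).2

/-- `adp(φ) = min (adp¹(φ), adp²(φ))` -/
def adpP (φ : PF OC) : ℕ := min (adp1P φ) (adp2P φ)

/-- `□_{i,E}^m χ`, in the component language: `□_{i,E}^{m+1} χ =
□_E □_i □_E □_{i,E}^m χ` -/
def boxIE : ℕ → PF OU → PF OU
  | 0, χ => χ
  | n + 1, χ => .box none (.box (some ()) (.box none (boxIE n χ)))

/-- `□_{i,E}^{≤m} χ = χ ∧ □_{i,E}^1 χ ∧ … ∧ □_{i,E}^m χ` -/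
def boxIELe : ℕ → PF OU → PF OU
  | 0, χ => χ
  | n + 1, χ => .and (boxIELe n χ) (boxIE (n + 1) χ)

open Classical in
/-- `Q₁(φ)`: all `Θ¹(φ)`-quasistates `q` with `⊬_L ¬q̂` (for `L = L1 ⊗_E L2`) -/
noncomputable def Qset1P (L : Set (PF OC)) (φ : PF OC) :
    Finset (Finset (Finset (PF OC))) :=
  ((Theta1P φ ∪ (Theta1P φ).image PF.neg).powerset.powerset).filter
    (fun q => IsQuasistateP none (Theta1P φ) q ∧ PF.neg (qhatP none q) ∉ L)

open Classical in
/-- `Q₂(φ)` -/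
noncomputable def Qset2P (L : Set (PF OC)) (φ : PF OC) :
    Finset (Finset (Finset (PF OC))) :=
  ((Theta2P φ ∪ (Theta2P φ).image PF.neg).powerset.powerset).filter
    (fun q => IsQuasistateP none (Theta2P φ) q ∧ PF.neg (qhatP none q) ∉ L)

end PropML

namespace PropML

/-! ### soundness -/

theorem tautEval_pval {M : Type} {F : KFrame M} (V : ℕ → F.W → Prop) (w : F.W) (φ : PF M) :
    tautEval (fun χ => PVal (F := F) V χ w) φ ↔ PVal (F := F) V φ w := by
  induction φ with
  | atom n => rfl
  | neg φ ih => simp only [tautEval, PVal, ih]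
  | and φ ψ ih1 ih2 => simp only [tautEval, PVal, ih1, ih2]
  | box m φ ih => rfl

theorem pval_imp {M : Type} {F : KFrame M} (V : ℕ → F.W → Prop) (w : F.W) (φ ψ : PF M) :
    PVal (F := F) V (PF.imp φ ψ) w ↔ (PVal (F := F) V φ w → PVal (F := F) V ψ w) := by
  simp only [PF.imp, PVal]; tauto

theorem pval_subst {M : Type} {F : KFrame M} (V : ℕ → F.W → Prop) (σ : ℕ → PF M) (φ : PF M)
    (w : F.W) :
    PVal (F := F) V (PF.substP σ φ) w ↔
      PVal (F := F) (fun n w => PVal (F := F) V (σ n) w) φ w := by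
  induction φ generalizing w with
  | atom n => rfl
  | neg φ ih => simp only [PF.substP, PVal, ih]
  | and φ ψ ih1 ih2 => simp only [PF.substP, PVal, ih1, ih2]
  | box m φ ih => simp only [PF.substP, PVal, ih]

/-- reduct along a renaming of operators -/
def redu {M M' : Type} (f : M → M') (F : KFrame M') : KFrame M := ⟨F.W, F.ne, fun m => F.R (f m)⟩

theorem pval_mapOp {M M' : Type} (f : M → M') {F : KFrame M'} (V : ℕ → F.W → Prop) (φ : PF M)
    (w : F.W) :
    PVal (F := F) V (PF.mapOp f φ) w ↔ PVal (F := redu f F) V φ w := by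
  induction φ generalizing w with
  | atom n => rfl
  | neg φ ih => simp only [PF.mapOp, PVal, ih]
  | and φ ψ ih1 ih2 => simp only [PF.mapOp, PVal, ih1, ih2]
  | box m φ ih => simp only [PF.mapOp, PVal, ih]; rfl

theorem valid_logic {M : Type} (F : KFrame M) : IsPLogic {φ | PValid F φ} where
  taut φ h V w := (tautEval_pval V w φ).1 (h _)
  kax m n k V w := by
    simp only [pval_imp, PVal]
    intro h1 h2 v hv
    exact h1 v hv (h2 v hv)
  mp φ ψ h1 h2 V w := (pval_imp V w φ ψ).1 (h1 V w) (h2 V w)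
  nec m φ h V w v _ := h V v
  subst σ φ h V w := (pval_subst V σ φ w).2 (h _ w)

theorem fusion_logic {M1 M2 : Type} (L1 : Set (PF (Option M1))) (L2 : Set (PF (Option M2))) :
    IsPLogic (fusionE L1 L2) where
  taut φ h := by intro L hL; exact hL.1.taut φ h
  kax m n k := by intro L hL; exact hL.1.kax m n k
  mp φ ψ h1 h2 := by intro L hL; exact hL.1.mp φ ψ (h1 L hL) (h2 L hL)
  nec m φ h := by intro L hL; exact hL.1.nec m φ (h L hL)
  subst σ φ h := by intro L hL; exact hL.1.subst σ φ (h L hL)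

theorem fusion_frame {M1 M2 : Type} (L1 : Set (PF (Option M1))) (L2 : Set (PF (Option M2)))
    (F : KFrame (Option (M1 ⊕ M2)))
    (h1 : FrameFor (redu (Option.map Sum.inl) F) L1)
    (h2 : FrameFor (redu (Option.map Sum.inr) F) L2) : FrameFor F (fusionE L1 L2) := by
  intro φ hφ
  refine hφ {φ | PValid F φ} ⟨valid_logic F, ?_, ?_⟩
  · rintro _ ⟨ψ, hψ, rfl⟩ V w
    exact (pval_mapOp _ V ψ w).2 (h1 ψ hψ V w)
  · rintro _ ⟨ψ, hψ, rfl⟩ V w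
    exact (pval_mapOp _ V ψ w).2 (h2 ψ hψ V w)

theorem frame_equiv {M : Type} {L : Set (PF M)} {e : M} (hS : ContainsS5 L e) {F : KFrame M}
    (hF : FrameFor F L) : Equivalence (F.R e) := by
  obtain ⟨hT, h4, h5⟩ := hS
  have hrefl : ∀ w, F.R e w w := by
    intro w
    have := hF _ hT (fun _ v => F.R e w v) w
    rw [pval_imp] at this
    exact this (fun v hv => hv)
  have heuc : ∀ w v u, F.R e w v → F.R e w u → F.R e v u := by
    intro w v u h1 h2
    have := hF _ h5 (fun _ x => x = u) w
    rw [pval_imp] at this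
    simp only [PF.dia, PVal] at this
    have := this (fun h => h u h2 rfl) v h1
    by_contra hc
    apply this
    intro x hx hxu
    subst hxu
    exact hc hx
  have hsymm : ∀ w v, F.R e w v → F.R e v w := fun w v h => heuc w v w h (hrefl w)
  exact ⟨hrefl, fun h => hsymm _ _ h, fun h1 h2 => heuc _ _ _ (hsymm _ _ h1) h2⟩

/-! ### canonical model -/

section canon
variable {M : Type}

structure IsTh (L : Set (PF M)) (T : Set (PF M)) : Prop where
  sub : L ⊆ T
  mp : ∀ φ ψ, PF.imp φ ψ ∈ T → φ ∈ T → ψ ∈ T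

structure IsMCS (L : Set (PF M)) (T : Set (PF M)) : Prop extends IsTh L T where
  neg : ∀ φ, PF.neg φ ∈ T ↔ φ ∉ T

theorem lindenbaum {L : Set (PF M)} (hL : IsPLogic L) {T : Set (PF M)} (hT : IsTh L T)
    {ψ : PF M} (hψ : ψ ∉ T) : ∃ U, IsMCS L U ∧ T ⊆ U ∧ ψ ∉ U := by
  obtain ⟨U, hTU, hU⟩ := zorn_subset_nonempty {U | IsTh L U ∧ ψ ∉ U} (by
    intro c hc hch hne
    refine ⟨⋃₀ c, ⟨⟨?_, ?_⟩, ?_⟩, fun s hs => Set.subset_sUnion_of_mem hs⟩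
    · obtain ⟨s, hs⟩ := hne
      exact (hc hs).1.sub.trans (Set.subset_sUnion_of_mem hs)
    · rintro φ χ ⟨s, hs, h1⟩ ⟨t, ht, h2⟩
      rcases hch.total hs ht with h | h
      · exact ⟨t, ht, (hc ht).1.mp φ χ (h h1) h2⟩
      · exact ⟨s, hs, (hc hs).1.mp φ χ h1 (h h2)⟩
    · rintro ⟨s, hs, h⟩
      exact (hc hs).2 h) T ⟨hT, hψ⟩
  obtain ⟨⟨hUT, hUψ⟩, hmax⟩ := hU
  have key : ∀ χ, χ ∉ U → PF.imp χ ψ ∈ U := by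
    intro χ hχ
    by_contra hc
    have hle : U ⊆ {θ | PF.imp χ θ ∈ U} := by
      intro θ hθ
      refine hUT.mp θ _ (hUT.sub (hL.taut _ ?_)) hθ
      intro v; simp only [PF.imp, tautEval]; tauto
    have := hmax (y := {θ | PF.imp χ θ ∈ U}) ⟨⟨hUT.sub.trans hle, ?_⟩, hc⟩ hle
    · apply hχ
      apply this
      apply hUT.sub
      apply hL.taut
      intro v; simp only [PF.imp, tautEval]; tauto
    · intro a b h1 h2
      refine hUT.mp (PF.imp χ a) _ (hUT.mp (PF.imp χ (PF.imp a b)) _ (hUT.sub (hL.taut _ ?_)) h1) h2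
      intro v; simp only [PF.imp, tautEval]; tauto
  refine ⟨U, ⟨hUT, ?_⟩, hTU, hUψ⟩
  intro χ
  constructor
  · intro h1 h2
    apply hUψ
    refine hUT.mp χ _ (hUT.mp (PF.neg χ) _ (hUT.sub (hL.taut _ ?_)) h1) h2
    intro v; simp only [PF.imp, tautEval]; tauto
  · intro h1
    by_contra h2
    apply hUψ
    refine hUT.mp _ _ (hUT.mp _ _ (hUT.sub (hL.taut (PF.imp (PF.imp χ ψ)
      (PF.imp (PF.imp (PF.neg χ) ψ) ψ)) ?_)) (key _ h1)) (key _ h2)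
    intro v; simp only [PF.imp, tautEval]; tauto

theorem mcs_and {L : Set (PF M)} (hL : IsPLogic L) {T : Set (PF M)} (hT : IsMCS L T)
    (φ ψ : PF M) : PF.and φ ψ ∈ T ↔ φ ∈ T ∧ ψ ∈ T := by
  refine ⟨fun h => ⟨hT.mp _ _ (hT.sub (hL.taut _ ?_)) h, hT.mp _ _ (hT.sub (hL.taut _ ?_)) h⟩,
    fun h => hT.mp _ _ (hT.mp _ _ (hT.sub (hL.taut _ ?_)) h.1) h.2⟩
  all_goals intro v; simp only [PF.imp, tautEval]; tauto

theorem kgen {L : Set (PF M)} (hL : IsPLogic L) (m : M) (φ ψ : PF M) :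
    PF.imp (.box m (PF.imp φ ψ)) (PF.imp (.box m φ) (.box m ψ)) ∈ L := by
  have := hL.subst (fun n => if n = 0 then φ else ψ) _ (hL.kax m 0 1)
  simpa [PF.substP, PF.imp] using this

theorem mcs_box {L : Set (PF M)} (hL : IsPLogic L) {T : Set (PF M)} (hT : IsMCS L T)
    (m : M) (φ : PF M) :
    PF.box m φ ∈ T ↔ ∀ U, IsMCS L U → (∀ χ, PF.box m χ ∈ T → χ ∈ U) → φ ∈ U := by
  refine ⟨fun h U _ hU => hU _ h, fun h => ?_⟩
  by_contra hc
  have hth : IsTh L {χ | PF.box m χ ∈ T} := by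
    refine ⟨fun χ hχ => hT.sub (hL.nec m χ hχ), fun a b h1 h2 => ?_⟩
    exact hT.mp _ _ (hT.mp _ _ (hT.sub (kgen hL m a b)) h1) h2
  obtain ⟨U, hU, hTU, hφ⟩ := lindenbaum hL hth hc
  exact hφ (h U hU (fun χ hχ => hTU hχ))

/-- canonical frame -/
def canF (L : Set (PF M)) (h : Nonempty {T // IsMCS L T}) : KFrame M :=
  ⟨{T // IsMCS L T}, h, fun m T U => ∀ χ, PF.box m χ ∈ T.1 → χ ∈ U.1⟩

theorem canF_truth {L : Set (PF M)} (hL : IsPLogic L) (h : Nonempty {T // IsMCS L T})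
    (φ : PF M) (w : (canF L h).W) :
    PVal (F := canF L h) (fun n w => PF.atom n ∈ w.1) φ w ↔ φ ∈ w.1 := by
  induction φ generalizing w with
  | atom n => rfl
  | neg φ ih => simp only [PVal, ih, w.2.neg]
  | and φ ψ ih1 ih2 => simp only [PVal, ih1, ih2, mcs_and hL w.2]
  | box m φ ih =>
    rw [mcs_box hL w.2]
    simp only [PVal, ih]
    exact ⟨fun h U hU hR => h ⟨U, hU⟩ hR, fun h U hR => h U.1 U.2 hR⟩

theorem canF_equiv {L : Set (PF M)} (hL : IsPLogic L) {e : M} (hS : ContainsS5 L e)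
    (h : Nonempty {T // IsMCS L T}) : Equivalence ((canF L h).R e) := by
  obtain ⟨hT, h4, h5⟩ := hS
  have hT' : ∀ (w : {T // IsMCS L T}) θ, PF.box e θ ∈ w.1 → θ ∈ w.1 := fun w θ =>
    w.2.mp _ _ (w.2.sub (hL.subst (fun _ => θ) _ hT))
  have h5' : ∀ (w : {T // IsMCS L T}) θ, PF.dia e θ ∈ w.1 → PF.box e (PF.dia e θ) ∈ w.1 :=
    fun w θ => w.2.mp _ _ (w.2.sub (hL.subst (fun _ => θ) _ h5))
  have hrefl : ∀ w, (canF L h).R e w w := hT'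
  have heuc : ∀ w v u, (canF L h).R e w v → (canF L h).R e w u → (canF L h).R e v u := by
    intro w v u h1 h2 θ hθ
    by_contra hc
    have h3 : PF.dia e (PF.neg θ) ∈ w.1 := by
      unfold PF.dia
      rw [w.2.neg]
      intro hb
      have := h2 _ hb
      rw [u.2.neg, u.2.neg] at this
      exact this hc
    have h6 := h1 _ (h5' w _ h3)
    unfold PF.dia at h6
    rw [v.2.neg] at h6
    apply h6
    refine v.2.mp _ _ (v.2.mp _ _ (v.2.sub (kgen hL e θ _)) (v.2.sub (hL.nec e _ (hL.taut _ ?_)))) hθ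
    intro v; simp only [PF.imp, tautEval]; tauto
  have hsymm : ∀ w v, (canF L h).R e w v → (canF L h).R e v w :=
    fun w v h => heuc w v w h (hrefl w)
  exact ⟨hrefl, fun h => hsymm _ _ h, fun h1 h2 => heuc _ _ _ (hsymm _ _ h1) h2⟩

end canon

/-! ### gluing -/

theorem glue {W1 W2 Λ T : Type} (E1 : Setoid W1) (E2 : Setoid W2) (l1 : W1 → Λ) (l2 : W2 → Λ)
    (t1 : W1 → T) (t2 : W2 → T)
    (hl1 : ∀ a b, E1 a b → l1 a = l1 b) (hl2 : ∀ a b, E2 a b → l2 a = l2 b)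
    (cnt : Λ → T → Cardinal.{0})
    (h1 : ∀ w t, Cardinal.mk {v // E1 w v ∧ t1 v = t} = cnt (l1 w) t)
    (h2 : ∀ w t, Cardinal.mk {v // E2 w v ∧ t2 v = t} = cnt (l2 w) t)
    (hex : ∀ a, (∃ w, l1 w = a) ↔ ∃ w, l2 w = a) :
    ∃ (I : Type) (_ : Nonempty I) (e : W1 × I ≃ W2 × I),
      (∀ x y, (E1 x.1 y.1 ∧ x.2 = y.2) ↔ (E2 (e x).1 (e y).1 ∧ (e x).2 = (e y).2)) ∧
      ∀ x, l1 x.1 = l2 (e x).1 ∧ t1 x.1 = t2 (e x).1 := by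
  classical
  let I : Type := W1 ⊕ W2 ⊕ ℕ
  have hI : Cardinal.aleph0 ≤ Cardinal.mk I := by
    simp only [I, Cardinal.mk_sum, Cardinal.lift_id, Cardinal.mk_nat]
    exact le_trans (self_le_add_left _ _) (self_le_add_left _ _)
  let L1 : Quotient E1 → Λ := Quotient.lift l1 hl1
  let L2 : Quotient E2 → Λ := Quotient.lift l2 hl2
  have c1 : Cardinal.mk (Quotient E1) ≤ Cardinal.mk I := by
    refine (Cardinal.mk_le_of_surjective Quotient.mk_surjective).trans ?_
    exact Cardinal.mk_le_of_injective (f := fun w => (Sum.inl w : I)) Sum.inl_injective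
  have c2 : Cardinal.mk (Quotient E2) ≤ Cardinal.mk I := by
    refine (Cardinal.mk_le_of_surjective Quotient.mk_surjective).trans ?_
    exact Cardinal.mk_le_of_injective (f := fun w => (Sum.inr (Sum.inl w) : I))
      (Sum.inr_injective.comp Sum.inl_injective)
  have hq : ∀ a, Nonempty ({c : Quotient E1 × I // L1 c.1 = a} ≃ {c : Quotient E2 × I // L2 c.1 = a}) := by
    intro a
    have e1 : {c : Quotient E1 × I // L1 c.1 = a} ≃ {c : Quotient E1 // L1 c = a} × I :=
      (Equiv.prodSubtypeFstEquivSubtypeProd (p := fun c => L1 c = a))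
    have e2 : {c : Quotient E2 × I // L2 c.1 = a} ≃ {c : Quotient E2 // L2 c = a} × I :=
      (Equiv.prodSubtypeFstEquivSubtypeProd (p := fun c => L2 c = a))
    by_cases hne : ∃ w, l1 w = a
    · obtain ⟨w1, hw1⟩ := hne
      obtain ⟨w2, hw2⟩ := (hex a).1 ⟨w1, hw1⟩
      have m1 : Cardinal.mk ({c : Quotient E1 // L1 c = a} × I) = Cardinal.mk I := by
        rw [Cardinal.mk_prod, Cardinal.lift_id, Cardinal.lift_id]
        refine Cardinal.mul_eq_right hI ((Cardinal.mk_subtype_le _).trans c1) ?_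
        rw [Cardinal.mk_ne_zero_iff]
        exact ⟨⟨Quotient.mk _ w1, hw1⟩⟩
      have m2 : Cardinal.mk ({c : Quotient E2 // L2 c = a} × I) = Cardinal.mk I := by
        rw [Cardinal.mk_prod, Cardinal.lift_id, Cardinal.lift_id]
        refine Cardinal.mul_eq_right hI ((Cardinal.mk_subtype_le _).trans c2) ?_
        rw [Cardinal.mk_ne_zero_iff]
        exact ⟨⟨Quotient.mk _ w2, hw2⟩⟩
      obtain ⟨e⟩ := Cardinal.eq.1 (m1.trans m2.symm)
      exact ⟨e1.trans (e.trans e2.symm)⟩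
    · have n1 : IsEmpty {c : Quotient E1 × I // L1 c.1 = a} := by
        constructor
        rintro ⟨⟨c, i⟩, hc⟩
        induction c using Quotient.inductionOn with
        | h w => exact hne ⟨w, hc⟩
      have n2 : IsEmpty {c : Quotient E2 × I // L2 c.1 = a} := by
        constructor
        rintro ⟨⟨c, i⟩, hc⟩
        induction c using Quotient.inductionOn with
        | h w => exact hne ((hex a).2 ⟨w, hc⟩)
      exact ⟨Equiv.equivOfIsEmpty _ _⟩
  have eq0 := fun a => Classical.choice (hq a)
  let eQ : Quotient E1 × I ≃ Quotient E2 × I :=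
    (Equiv.sigmaFiberEquiv (fun c : Quotient E1 × I => L1 c.1)).symm.trans
      ((Equiv.sigmaCongrRight eq0).trans (Equiv.sigmaFiberEquiv (fun c : Quotient E2 × I => L2 c.1)))
  have hQ : ∀ c, L2 (eQ c).1 = L1 c.1 := by
    intro c
    exact (eq0 (L1 c.1) ⟨c, rfl⟩).2
  have hf : ∀ (c : Quotient E1 × I) (t : T), Nonempty
      ({x : {x : W1 × I // (Quotient.mk E1 x.1, x.2) = c} // t1 x.1.1 = t} ≃
        {x : {x : W2 × I // (Quotient.mk E2 x.1, x.2) = eQ c} // t2 x.1.1 = t}) := by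
    intro c t
    have g1 : ∀ (c : Quotient E1 × I), Cardinal.mk
        {x : {x : W1 × I // (Quotient.mk E1 x.1, x.2) = c} // t1 x.1.1 = t} = cnt (L1 c.1) t := by
      rintro ⟨c, i⟩
      induction c using Quotient.inductionOn with
      | h w =>
        refine Eq.trans ?_ (h1 w t)
        refine Cardinal.mk_congr ⟨fun x => ⟨x.1.1.1, ?_, x.2⟩, fun v => ⟨⟨(v.1, i), ?_⟩, v.2.2⟩, ?_, ?_⟩
        · have := x.1.2
          rw [Prod.mk.injEq] at this
          exact E1.symm (Quotient.exact this.1)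
        · rw [Prod.mk.injEq]
          exact ⟨Quotient.sound (E1.symm v.2.1), rfl⟩
        · rintro ⟨⟨⟨x, j⟩, hx⟩, hx2⟩
          rw [Prod.mk.injEq] at hx
          obtain ⟨_, rfl⟩ := hx
          rfl
        · intro v; rfl
    have g2 : ∀ (c : Quotient E2 × I), Cardinal.mk
        {x : {x : W2 × I // (Quotient.mk E2 x.1, x.2) = c} // t2 x.1.1 = t} = cnt (L2 c.1) t := by
      rintro ⟨c, i⟩
      induction c using Quotient.inductionOn with
      | h w =>
        refine Eq.trans ?_ (h2 w t)
        refine Cardinal.mk_congr ⟨fun x => ⟨x.1.1.1, ?_, x.2⟩, fun v => ⟨⟨(v.1, i), ?_⟩, v.2.2⟩, ?_, ?_⟩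
        · have := x.1.2
          rw [Prod.mk.injEq] at this
          exact E2.symm (Quotient.exact this.1)
        · rw [Prod.mk.injEq]
          exact ⟨Quotient.sound (E2.symm v.2.1), rfl⟩
        · rintro ⟨⟨⟨x, j⟩, hx⟩, hx2⟩
          rw [Prod.mk.injEq] at hx
          obtain ⟨_, rfl⟩ := hx
          rfl
        · intro v; rfl
    apply Cardinal.eq.1
    rw [g1, g2, hQ]
  have ef0 := fun c t => Classical.choice (hf c t)
  let ef : ∀ c : Quotient E1 × I, {x : W1 × I // (Quotient.mk E1 x.1, x.2) = c} ≃
      {x : W2 × I // (Quotient.mk E2 x.1, x.2) = eQ c} := fun c =>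
    (Equiv.sigmaFiberEquiv (fun x : {x : W1 × I // (Quotient.mk E1 x.1, x.2) = c} => t1 x.1.1)).symm.trans
      ((Equiv.sigmaCongrRight (ef0 c)).trans (Equiv.sigmaFiberEquiv
        (fun x : {x : W2 × I // (Quotient.mk E2 x.1, x.2) = eQ c} => t2 x.1.1)))
  have hef : ∀ c x, t2 (ef c x).1.1 = t1 x.1.1 := by
    intro c x
    exact (ef0 c (t1 x.1.1) ⟨x, rfl⟩).2
  let e : W1 × I ≃ W2 × I :=
    (Equiv.sigmaFiberEquiv (fun x : W1 × I => (Quotient.mk E1 x.1, x.2))).symm.trans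
      ((Equiv.sigmaCongr eQ ef).trans
        (Equiv.sigmaFiberEquiv (fun x : W2 × I => (Quotient.mk E2 x.1, x.2))))
  have he1 : ∀ x, (Quotient.mk E2 (e x).1, (e x).2) = eQ (Quotient.mk E1 x.1, x.2) := by
    intro x
    exact (ef (Quotient.mk E1 x.1, x.2) ⟨x, rfl⟩).2
  have he2 : ∀ x, t2 (e x).1 = t1 x.1 := by
    intro x
    exact hef (Quotient.mk E1 x.1, x.2) ⟨x, rfl⟩
  refine ⟨I, ⟨Sum.inr (Sum.inr 0)⟩, e, ?_, ?_⟩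
  · intro x y
    have a1 : (E1 x.1 y.1 ∧ x.2 = y.2) ↔
        (Quotient.mk E1 x.1, x.2) = (Quotient.mk E1 y.1, y.2) := by
      rw [Prod.mk.injEq, Quotient.eq]
    have a2 : (E2 (e x).1 (e y).1 ∧ (e x).2 = (e y).2) ↔
        (Quotient.mk E2 (e x).1, (e x).2) = (Quotient.mk E2 (e y).1, (e y).2) := by
      rw [Prod.mk.injEq, Quotient.eq]
    rw [a1, a2, he1, he1, eQ.injective.eq_iff]
  · intro x
    refine ⟨?_, (he2 x).symm⟩
    have := hQ (Quotient.mk E1 x.1, x.2)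
    rw [← he1] at this
    exact this.symm

/-! ### abstract semantics of quasistates -/

structure Sem {W : Type} (E : W → W → Prop) (H : PF OC → W → Prop) : Prop where
  eqv : Equivalence E
  neg : ∀ χ w, H (.neg χ) w ↔ ¬ H χ w
  and : ∀ χ ψ w, H (.and χ ψ) w ↔ H χ w ∧ H ψ w
  box : ∀ χ w, H (.box none χ) w ↔ ∀ v, E w v → H χ v

section sem
variable {W : Type} {E : W → W → Prop} {H : PF OC → W → Prop}

theorem Sem.foldl (S : Sem E H) (l : List (PF OC)) (φ : PF OC) (w : W) :
    H (List.foldl PF.and φ l) w ↔ H φ w ∧ ∀ χ ∈ l, H χ w := by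
  induction l generalizing φ with
  | nil => simp
  | cons a l ih => simp [ih, S.and, and_assoc]

theorem Sem.bigAnd (S : Sem E H) (l : List (PF OC)) (w : W) :
    H (bigAndP l) w ↔ ∀ χ ∈ l, H χ w := by
  cases l with
  | nil => simp [bigAndP, PF.imp, S.neg, S.and]
  | cons a l => simp [bigAndP, S.foldl]

theorem Sem.bigOr (S : Sem E H) (l : List (PF OC)) (w : W) :
    H (bigOrP l) w ↔ ∃ χ ∈ l, H χ w := by
  simp [bigOrP, S.bigAnd, S.neg]

theorem Sem.dia (S : Sem E H) (χ : PF OC) (w : W) :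
    H (PF.dia none χ) w ↔ ∃ v, E w v ∧ H χ v := by
  simp [PF.dia, S.neg, S.box]

theorem Sem.conj (S : Sem E H) (t : Finset (PF OC)) (w : W) :
    H (typeConjP t) w ↔ ∀ χ ∈ t, H χ w := by
  simp [typeConjP, S.bigAnd]

theorem Sem.qhat (S : Sem E H) (q : Finset (Finset (PF OC))) (w : W) :
    H (qhatP none q) w ↔ (∀ v, E w v → ∃ t ∈ q, ∀ χ ∈ t, H χ v) ∧
      ∀ t ∈ q, ∃ v, E w v ∧ ∀ χ ∈ t, H χ v := by
  simp [qhatP, S.and, S.box, S.bigOr, S.bigAnd, S.dia, S.conj]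

open Classical in
/-- the type of a world -/
noncomputable def tp (Φ : Finset (PF OC)) (H : PF OC → W → Prop) (v : W) : Finset (PF OC) :=
  Φ.filter (fun χ => H χ v) ∪ (Φ.filter (fun χ => ¬ H χ v)).image PF.neg

open Classical in
/-- the quasistate of a world -/
noncomputable def qs (Φ : Finset (PF OC)) (E : W → W → Prop) (H : PF OC → W → Prop) (w : W) :
    Finset (Finset (PF OC)) :=
  (Φ ∪ Φ.image PF.neg).powerset.filter (fun t => ∃ v, E w v ∧ tp Φ H v = t)

theorem mem_tp {Φ : Finset (PF OC)} {v : W} {χ : PF OC} :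
    χ ∈ tp Φ H v ↔ (χ ∈ Φ ∧ H χ v) ∨ ∃ ψ ∈ Φ, ¬ H ψ v ∧ PF.neg ψ = χ := by
  simp [tp, and_assoc]

theorem Sem.mem_tp_iff (S : Sem E H) {Φ : Finset (PF OC)} {v : W} {χ : PF OC} (h : χ ∈ Φ) :
    χ ∈ tp Φ H v ↔ H χ v := by
  rw [mem_tp]
  constructor
  · rintro (h | ⟨ψ, h1, h2, rfl⟩)
    · exact h.2
    · exact (S.neg _ _).2 h2
  · intro h2
    exact Or.inl ⟨h, h2⟩

theorem mem_qs {Φ : Finset (PF OC)} {w : W} {t : Finset (PF OC)} :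
    t ∈ qs Φ E H w ↔ ∃ v, E w v ∧ tp Φ H v = t := by
  simp only [qs, Finset.mem_filter, Finset.mem_powerset, and_iff_right_iff_imp]
  rintro ⟨v, -, rfl⟩ χ hχ
  rw [mem_tp] at hχ
  simp only [Finset.mem_union, Finset.mem_image]
  rcases hχ with h | ⟨ψ, h1, h2, h3⟩
  · exact Or.inl h.1
  · exact Or.inr ⟨ψ, h1, h3⟩

theorem Sem.qs_eq (S : Sem E H) {Φ : Finset (PF OC)} {w v : W} (h : E w v) :
    qs Φ E H w = qs Φ E H v := by
  ext t
  rw [mem_qs, mem_qs]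
  constructor
  · rintro ⟨u, h1, h2⟩
    exact ⟨u, S.eqv.trans (S.eqv.symm h) h1, h2⟩
  · rintro ⟨u, h1, h2⟩
    exact ⟨u, S.eqv.trans h h1, h2⟩

theorem Sem.type_iff (S : Sem E H) {Φ t : Finset (PF OC)} (ht : IsTypeP Φ t) (v : W) :
    (∀ χ ∈ t, H χ v) ↔ tp Φ H v = t := by
  obtain ⟨h1, h2, -⟩ := ht
  constructor
  · intro h
    ext ξ
    rw [mem_tp]
    constructor
    · rintro (⟨a, b⟩ | ⟨ψ, a, b, rfl⟩)
      · by_contra hc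
        exact (S.neg _ _).1 (h _ ((h2 ξ a).2 hc)) b
      · exact (h2 ψ a).2 (fun hc => b (h _ hc))
    · intro hξ
      rcases h1 ξ hξ with a | ⟨ψ, a, rfl⟩
      · exact Or.inl ⟨a, h _ hξ⟩
      · exact Or.inr ⟨ψ, a, (S.neg _ _).1 (h _ hξ), rfl⟩
  · rintro h χ hχ
    rw [← h, mem_tp] at hχ
    rcases hχ with a | ⟨ψ, a, b, rfl⟩
    · exact a.2
    · exact (S.neg _ _).2 b

theorem Sem.qhat_iff (S : Sem E H) {Φ : Finset (PF OC)} {q : Finset (Finset (PF OC))}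
    (hq : ∀ t ∈ q, IsTypeP Φ t) (w : W) : H (qhatP none q) w ↔ qs Φ E H w = q := by
  rw [S.qhat]
  constructor
  · rintro ⟨h1, h2⟩
    ext t
    rw [mem_qs]
    constructor
    · rintro ⟨v, hv, rfl⟩
      obtain ⟨t, ht, h3⟩ := h1 v hv
      rw [S.type_iff (hq t ht)] at h3
      rwa [h3]
    · intro ht
      obtain ⟨v, hv, h3⟩ := h2 t ht
      exact ⟨v, hv, (S.type_iff (hq t ht) v).1 h3⟩
  · rintro rfl
    constructor
    · intro v hv
      have : tp Φ H v ∈ qs Φ E H w := mem_qs.2 ⟨v, hv, rfl⟩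
      exact ⟨_, this, (S.type_iff (hq _ this) v).2 rfl⟩
    · intro t ht
      obtain ⟨v, hv, h3⟩ := mem_qs.1 ht
      exact ⟨v, hv, (S.type_iff (hq _ ht) v).2 h3⟩

theorem Sem.Qhat_iff (S : Sem E H) {Φ : Finset (PF OC)} {Q : Finset (Finset (Finset (PF OC)))}
    (hQ : ∀ q ∈ Q, ∀ t ∈ q, IsTypeP Φ t) (w : W) :
    H (QhatP none Q) w ↔ qs Φ E H w ∈ Q := by
  simp only [QhatP, S.bigOr, List.mem_map, Finset.mem_toList]
  constructor
  · rintro ⟨_, ⟨q, hq, rfl⟩, h⟩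
    rw [S.qhat_iff (hQ q hq)] at h
    rwa [h]
  · intro h
    exact ⟨_, ⟨_, h, rfl⟩, (S.qhat_iff (hQ _ h) w).2 rfl⟩

/-- closure under immediate subformulas -/
structure SubClosed (Φ : Finset (PF OC)) : Prop where
  neg : ∀ χ, PF.neg χ ∈ Φ → χ ∈ Φ
  and : ∀ χ ψ, PF.and χ ψ ∈ Φ → χ ∈ Φ ∧ ψ ∈ Φ
  box : ∀ m χ, PF.box m χ ∈ Φ → χ ∈ Φ

theorem Sem.tp_type (S : Sem E H) {Φ : Finset (PF OC)} (hΦ : SubClosed Φ) (v : W) :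
    IsTypeP Φ (tp Φ H v) := by
  refine ⟨?_, ?_, ?_⟩
  · intro χ hχ
    rw [mem_tp] at hχ
    rcases hχ with h | ⟨ψ, h1, h2, h3⟩
    · exact Or.inl h.1
    · exact Or.inr ⟨ψ, h1, h3.symm⟩
  · intro ψ hψ
    rw [S.mem_tp_iff hψ, mem_tp]
    constructor
    · rintro (h | ⟨ψ', h1, h2, h3⟩)
      · exact (S.neg _ _).1 h.2
      · cases h3; exact h2
    · intro h; exact Or.inr ⟨ψ, hψ, h, rfl⟩
  · intro a b h
    rw [S.mem_tp_iff h, S.mem_tp_iff (hΦ.and _ _ h).1, S.mem_tp_iff (hΦ.and _ _ h).2, S.and]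

theorem Sem.qs_quasi (S : Sem E H) {Φ : Finset (PF OC)} (hΦ : SubClosed Φ) (w : W) :
    IsQuasistateP none Φ (qs Φ E H w) := by
  refine ⟨⟨tp Φ H w, mem_qs.2 ⟨w, S.eqv.refl w, rfl⟩⟩, ?_, ?_⟩
  · intro t ht
    obtain ⟨v, -, rfl⟩ := mem_qs.1 ht
    exact S.tp_type hΦ v
  · intro ψ hψ t ht
    obtain ⟨v, hv, rfl⟩ := mem_qs.1 ht
    have hψ' := hΦ.neg _ (hΦ.box _ _ hψ)
    rw [(S.tp_type hΦ v).2.1 _ hψ, S.mem_tp_iff hψ, S.box]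
    constructor
    · intro h
      push Not at h
      obtain ⟨u, hu, h⟩ := h
      rw [S.neg, not_not] at h
      exact ⟨_, mem_qs.2 ⟨u, S.eqv.trans hv hu, rfl⟩, (S.mem_tp_iff hψ').2 h⟩
    · rintro ⟨t, ht, h⟩ hc
      obtain ⟨u, hu, rfl⟩ := mem_qs.1 ht
      rw [S.mem_tp_iff hψ'] at h
      exact (S.neg _ _).1 (hc u (S.eqv.trans (S.eqv.symm hv) hu)) h

end sem

/-! ### uniform treatment of the two components -/

def op : Bool → OC
  | true => some (Sum.inl ())
  | false => some (Sum.inr ())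

def emb : Bool → OU → OC
  | true => Option.map Sum.inl
  | false => Option.map Sum.inr

def sur : Bool → (PF OC → ℕ) → PF OC → PF OU
  | true => sur1P
  | false => sur2P

def mdd : Bool → PF OC → ℕ
  | true => md1P
  | false => md2P

section unif
variable (j : Bool) (s : PF OC → ℕ)

theorem op_cases (m : OC) : m = none ∨ m = op j ∨ m = op (!j) := by
  rcases m with _ | ⟨⟨⟩⟩ | ⟨⟨⟩⟩ <;> cases j <;> simp [op]

theorem emb_none : emb j none = none := by cases j <;> rfl
theorem emb_some (u : Unit) : emb j (some u) = op j := by cases j <;> rfl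
theorem sur_atom (n) : sur j s (.atom n) = .atom n := by cases j <;> rfl
theorem sur_neg (χ) : sur j s (.neg χ) = .neg (sur j s χ) := by cases j <;> rfl
theorem sur_and (χ ψ) : sur j s (.and χ ψ) = .and (sur j s χ) (sur j s ψ) := by cases j <;> rfl
theorem sur_boxE (χ) : sur j s (.box none χ) = .box none (sur j s χ) := by cases j <;> rfl
theorem sur_box (χ) : sur j s (.box (op j) χ) = .box (some ()) (sur j s χ) := by cases j <;> rfl
theorem sur_box' (χ) : sur j s (.box (op (!j)) χ) = .atom (s (.box (op (!j)) χ)) := by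
  cases j <;> rfl
theorem mdd_neg (χ) : mdd j (.neg χ) = mdd j χ := by cases j <;> rfl
theorem mdd_and (χ ψ) : mdd j (.and χ ψ) = max (mdd j χ) (mdd j ψ) := by cases j <;> rfl
theorem mdd_box (χ) : mdd j (.box (op j) χ) = mdd j χ + 1 := by cases j <;> rfl
theorem mdd_box_le (m χ) : mdd j χ ≤ mdd j (.box m χ) := by
  rcases m with _ | ⟨⟨⟩⟩ | ⟨⟨⟩⟩ <;> cases j <;> simp [mdd, md1P, md2P]

theorem sur_sem {F : KFrame OU} (V : ℕ → F.W → Prop) (hE : Equivalence (F.R none)) :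
    Sem (F.R none) (fun χ w => PVal (F := F) V (sur j s χ) w) where
  eqv := hE
  neg χ w := by simp only [sur_neg, PVal]
  and χ ψ w := by simp only [sur_and, PVal]
  box χ w := by simp only [sur_boxE, PVal]

end unif

theorem boxIELe_iff {F : KFrame OU} (V : ℕ → F.W → Prop) (n : ℕ) (χ : PF OU) (w : F.W) :
    PVal (F := F) V (boxIELe n χ) w ↔ ∀ m ≤ n, PVal (F := F) V (boxIE m χ) w := by
  induction n with
  | zero => simp [boxIELe, boxIE]
  | succ n ih =>
    simp only [boxIELe, PVal, ih]
    constructor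
    · rintro ⟨h1, h2⟩ m hm
      rcases Nat.le_succ_iff.1 hm with h | rfl
      · exact h1 m h
      · exact h2
    · intro h
      exact ⟨fun m hm => h m (by omega), h _ le_rfl⟩

theorem boxIELe_step {F : KFrame OU} (V : ℕ → F.W → Prop) (hE : Equivalence (F.R none)) (n : ℕ)
    (χ : PF OU) {w v : F.W} (h : PVal (F := F) V (boxIELe (n + 1) χ) w) (hR : F.R (some ()) w v) :
    PVal (F := F) V (boxIELe n χ) v := by
  rw [boxIELe_iff] at h ⊢
  intro m hm
  exact h (m + 1) (by omega) w (hE.refl w) v hR v (hE.refl v)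

theorem boxIELe_inv {F : KFrame OU} (V : ℕ → F.W → Prop) (hE : Equivalence (F.R none)) (n : ℕ)
    (χ : PF OU) (hχ : ∀ w v, F.R none w v → PVal (F := F) V χ w → PVal (F := F) V χ v)
    {w v : F.W} (hR : F.R none w v) (h : PVal (F := F) V (boxIELe n χ) w) :
    PVal (F := F) V (boxIELe n χ) v := by
  rw [boxIELe_iff] at h ⊢
  intro m hm
  cases m with
  | zero => exact hχ w v hR (h 0 hm)
  | succ m => exact fun u hu => h (m + 1) hm u (hE.trans hR hu)

theorem boxIELe_all {F : KFrame OU} (V : ℕ → F.W → Prop) (n : ℕ)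
    (χ : PF OU) (hχ : ∀ w, PVal (F := F) V χ w) (w : F.W) :
    PVal (F := F) V (boxIELe n χ) w := by
  rw [boxIELe_iff]
  intro m _
  clear * - hχ
  induction m generalizing w with
  | zero => exact hχ w
  | succ m ih => exact fun _ _ _ _ u _ => ih u

/-! ### canonical models for the components -/

theorem canon_exists (j : Bool) {L : Set (PF OC)} (hL : IsPLogic L) (hS : ContainsS5 L none)
    {Lj : Set (PF OU)} (hj : PF.mapOp (emb j) '' Lj ⊆ L) (s : PF OC → ℕ)
    (hs : Function.Injective s) {ψ : PF OC} (hψ : ψ ∉ L) :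
    ∃ (F : KFrame OU) (V : ℕ → F.W → Prop) (H : PF OC → F.W → Prop),
      Sem (F.R none) H ∧ Sem (F.R none) (fun χ w => PVal (F := F) V (sur j s χ) w) ∧
      (∀ χ w, (∀ n ∈ χ.atoms, ∀ θ, s θ ≠ n) → (H χ w ↔ PVal (F := F) V (sur j s χ) w)) ∧
      (∀ χ ∈ Lj, ∀ w, PVal (F := F) V χ w) ∧ (∀ χ ∈ L, ∀ w, H χ w) ∧ ∃ w, ¬ H ψ w := by
  classical
  obtain ⟨U, hU, -, hUψ⟩ := lindenbaum hL (T := L) ⟨subset_rfl, hL.mp⟩ hψ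
  let hne : Nonempty {T // IsMCS L T} := ⟨⟨U, hU⟩⟩
  let C := canF L hne
  let σ : ℕ → PF OC := fun n => if h : ∃ θ, s θ = n then h.choose else .atom n
  have hσ1 : ∀ θ, σ (s θ) = θ := by
    intro θ
    have h : ∃ θ', s θ' = s θ := ⟨θ, rfl⟩
    simp only [σ, dif_pos h]
    exact hs h.choose_spec
  have hσ2 : ∀ n, (∀ θ, s θ ≠ n) → σ n = .atom n := by
    intro n h
    simp only [σ]
    rw [dif_neg]
    rintro ⟨θ, hθ⟩
    exact h θ hθ
  have hE : Equivalence (C.R none) := canF_equiv hL hS hne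
  have hE' : Equivalence ((redu (emb j) C).R none) := by
    have : (redu (emb j) C).R none = C.R none := by
      show C.R (emb j none) = _
      rw [emb_none]
    rw [this]; exact hE
  have hR0 : (redu (emb j) C).R none = C.R none := by
    show C.R (emb j none) = _
    rw [emb_none]
  have hR1 : (redu (emb j) C).R (some ()) = C.R (op j) := by
    show C.R (emb j (some ())) = _
    rw [emb_some]
  refine ⟨redu (emb j) C, fun n w => σ n ∈ w.1, fun χ w => χ ∈ w.1, ⟨hE', ?_, ?_, ?_⟩,
    sur_sem j s _ hE', ?_, ?_, ?_, ⟨⟨U, hU⟩, hUψ⟩⟩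
  · exact fun χ w => w.2.neg χ
  · exact fun χ ψ w => mcs_and hL w.2 χ ψ
  · intro χ w
    rw [hR0, mcs_box hL w.2]
    exact ⟨fun h U hR => h U.1 U.2 hR, fun h U hU hR => h ⟨U, hU⟩ hR⟩
  · intro χ
    induction χ with
    | atom n =>
      intro w h
      rw [sur_atom]
      simp only [PVal]
      rw [hσ2 n (h n (by simp [PF.atoms]))]
    | neg χ ih =>
      intro w h
      simp only [sur_neg, PVal, ← ih w h]
      exact w.2.neg χ
    | and χ ψ ih1 ih2 =>
      intro w h
      simp only [PF.atoms, Finset.mem_union] at h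
      simp only [sur_and, PVal, ← ih1 w (fun n hn => h n (Or.inl hn)),
        ← ih2 w (fun n hn => h n (Or.inr hn))]
      exact mcs_and hL w.2 χ ψ
    | box m χ ih =>
      intro w h
      rcases op_cases j m with rfl | rfl | rfl
      · simp only [sur_boxE, PVal, hR0, ← fun w => ih w h]
        rw [mcs_box hL w.2]
        exact ⟨fun h U hR => h U.1 U.2 hR, fun h U hU hR => h ⟨U, hU⟩ hR⟩
      · simp only [sur_box, PVal, hR1, ← fun w => ih w h]
        rw [mcs_box hL w.2]
        exact ⟨fun h U hR => h U.1 U.2 hR, fun h U hU hR => h ⟨U, hU⟩ hR⟩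
      · simp only [sur_box', PVal, hσ1]
  · intro χ hχ w
    have h1 := w.2.sub (hL.subst σ _ (hj ⟨χ, hχ, rfl⟩))
    have h2 := (pval_subst _ _ _ _).1 ((canF_truth hL hne _ w).2 h1)
    simp only [canF_truth hL hne] at h2
    exact (pval_mapOp (F := C) (emb j) _ χ w).1 h2
  · exact fun χ hχ w => w.2.sub hχ

theorem fresh_tp {W : Type} {H H' : PF OC → W → Prop} {Φ : Finset (PF OC)}
    (h : ∀ χ ∈ Φ, ∀ w, H χ w ↔ H' χ w) (w : W) : tp Φ H w = tp Φ H' w := by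
  ext χ
  rw [mem_tp, mem_tp]
  constructor
  · rintro (⟨a, b⟩ | ⟨ψ, a, b, c⟩)
    · exact Or.inl ⟨a, (h _ a _).1 b⟩
    · exact Or.inr ⟨ψ, a, fun h' => b ((h _ a _).2 h'), c⟩
  · rintro (⟨a, b⟩ | ⟨ψ, a, b, c⟩)
    · exact Or.inl ⟨a, (h _ a _).2 b⟩
    · exact Or.inr ⟨ψ, a, fun h' => b ((h _ a _).1 h'), c⟩

theorem fresh_qs {W : Type} {E : W → W → Prop} {H H' : PF OC → W → Prop} {Φ : Finset (PF OC)}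
    (h : ∀ χ ∈ Φ, ∀ w, H χ w ↔ H' χ w) (w : W) : qs Φ E H w = qs Φ E H' w := by
  ext t
  simp only [mem_qs, fresh_tp h]

/-- the specification of the set of realisable quasistates -/
def QSpec (L : Set (PF OC)) (Φ : Finset (PF OC)) (Q : Finset (Finset (Finset (PF OC)))) : Prop :=
  ∀ q, q ∈ Q ↔ IsQuasistateP none Φ q ∧ PF.neg (qhatP none q) ∉ L

theorem notin_comp (j : Bool) {L : Set (PF OC)} (hL : IsPLogic L) (hS : ContainsS5 L none)
    {Lj : Set (PF OU)} (hj : PF.mapOp (emb j) '' Lj ⊆ L) (s : PF OC → ℕ)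
    (hs : Function.Injective s) {Φ : Finset (PF OC)} (hΦ : SubClosed Φ)
    (hfr : ∀ χ ∈ Φ, ∀ n ∈ χ.atoms, ∀ θ, s θ ≠ n) {Q} (hQ : QSpec L Φ Q) {ψ : PF OC}
    (hψ : ψ ∉ L) (hψ' : (∀ n ∈ ψ.atoms, ∀ θ, s θ ≠ n) ∨ ∃ q ∈ Q, ψ = .neg (qhatP none q))
    (n : ℕ) :
    PF.imp (boxIELe n (sur j s (QhatP none Q))) (sur j s ψ) ∉ Lj := by
  obtain ⟨F, V, H, S0, S1, h1, h2, h3, w, hw⟩ := canon_exists j hL hS hj s hs hψ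
  have hT : ∀ q ∈ Q, ∀ t ∈ q, IsTypeP Φ t := fun q hq => ((hQ q).1 hq).1.2.1
  have hqs := fresh_qs (E := F.R none) (Φ := Φ) (fun χ hχ w => h1 χ w (hfr χ hχ))
  have hall : ∀ w, PVal (F := F) V (sur j s (QhatP none Q)) w := by
    intro w
    refine (S1.Qhat_iff hT w).2 ?_
    rw [← hqs, hQ]
    refine ⟨S0.qs_quasi hΦ w, fun hc => ?_⟩
    have := h3 _ hc w
    rw [S0.neg] at this
    exact this ((S0.qhat_iff (S0.qs_quasi hΦ w).2.1 w).2 rfl)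
  intro hc
  have h4 := (pval_imp _ _ _ _).1 (h2 _ hc w) (boxIELe_all V n _ hall w)
  rcases hψ' with hf | ⟨q, hq, rfl⟩
  · exact hw ((h1 ψ w hf).2 h4)
  · rw [S0.neg, not_not, S0.qhat_iff (hT q hq)] at hw
    refine (S1.neg (qhatP none q) w).1 h4 ((S1.qhat_iff (hT q hq) w).2 ?_)
    rw [← hqs, hw]

/-! ### universal homogeneous models of the components -/

theorem pval_part {M I : Type} {F G : KFrame M} (b : F.W ≃ G.W × I)
    (hb : ∀ m x y, F.R m x y ↔ G.R m (b x).1 (b y).1 ∧ (b x).2 = (b y).2)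
    (V : ℕ → F.W → Prop) (i : I) (χ : PF M) (x : F.W) (hx : (b x).2 = i) :
    PVal (F := F) V χ x ↔ PVal (F := G) (fun n g => V n (b.symm (g, i))) χ (b x).1 := by
  induction χ generalizing x with
  | atom n =>
    subst hx
    simp [PVal]
  | neg χ ih => simp only [PVal, ih x hx]
  | and χ ψ ih1 ih2 => simp only [PVal, ih1 x hx, ih2 x hx]
  | box m χ ih =>
    simp only [PVal]
    constructor
    · intro h v hv
      have h1 := h (b.symm (v, i)) ((hb _ _ _).2 (by simpa using ⟨hv, hx⟩))
      rw [ih _ (by simp)] at h1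
      simpa using h1
    · intro h y hy
      rw [hb] at hy
      rw [ih y (hy.2.symm.trans hx)]
      exact h _ hy.1

theorem frameFor_part {M I : Type} {F G : KFrame M} {L : Set (PF M)} (hG : FrameFor G L)
    (b : F.W ≃ G.W × I)
    (hb : ∀ m x y, F.R m x y ↔ G.R m (b x).1 (b y).1 ∧ (b x).2 = (b y).2) : FrameFor F L :=
  fun χ hχ V x => (pval_part b hb V _ χ x rfl).2 (hG χ hχ _ _)

/-- disjoint union of frames -/
def dun {M ι : Type} (F : ι → KFrame M) (h : Nonempty ι) : KFrame M :=
  ⟨Σ i, (F i).W, ⟨⟨h.some, (F h.some).ne.some⟩⟩,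
    fun m x y => ∃ v, (F x.1).R m x.2 v ∧ y = ⟨x.1, v⟩⟩

theorem pval_dun {M ι : Type} (F : ι → KFrame M) (h : Nonempty ι)
    (V : ℕ → (dun F h).W → Prop) (χ : PF M) (i : ι) (w : (F i).W) :
    PVal (F := dun F h) V χ ⟨i, w⟩ ↔ PVal (F := F i) (fun n w => V n ⟨i, w⟩) χ w := by
  induction χ generalizing w with
  | atom n => rfl
  | neg χ ih => simp only [PVal, ih]
  | and χ ψ ih1 ih2 => simp only [PVal, ih1, ih2]
  | box m χ ih =>
    simp only [PVal, ← ih]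
    constructor
    · intro h v hv
      exact h _ ⟨v, hv, rfl⟩
    · rintro h _ ⟨v, hv, rfl⟩
      exact h v hv

theorem univ_model {M A : Type} {e : M} {L : Set (PF M)} {κ : Cardinal.{0}} (hA : Nonempty A)
    (hH : ∀ φ ∉ L, ∃ F : KFrame M, FrameFor F L ∧ ∃ V : ℕ → F.W → Prop,
      EHomog e V κ ∧ ∃ w, ¬ PVal (F := F) V φ w) {ψ₀ : PF M} (hψ₀ : ψ₀ ∉ L) :
    ∃ F : KFrame M, FrameFor F L ∧ ∃ V : ℕ → F.W → Prop, EHomog e V κ ∧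
      ∃ a : F.W → A, (∀ m x y, F.R m x y → a x = a y) ∧
        ∀ ψ ∉ L, ∀ α, ∃ w, a w = α ∧ ¬ PVal (F := F) V ψ w := by
  choose F hF V hV w hw using fun (φ : {φ // φ ∉ L}) => hH φ.1 φ.2
  let ι := {φ // φ ∉ L} × A
  let hι : Nonempty ι := ⟨⟨⟨ψ₀, hψ₀⟩, hA.some⟩⟩
  let F' : ι → KFrame M := fun i => F i.1
  refine ⟨dun F' hι, ?_, fun n x => V x.1.1 n x.2, ?_, fun x => x.1.2, ?_, ?_⟩
  · rintro χ hχ U ⟨i, x⟩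
    rw [pval_dun]
    exact hF _ _ hχ _ _
  · rintro ⟨i, x⟩ χ
    have : Cardinal.mk {v : (dun F' hι).W // (dun F' hι).R e ⟨i, x⟩ v ∧
        PVal (F := dun F' hι) (fun n x => V x.1.1 n x.2) χ v} =
        Cardinal.mk {v : (F i.1).W // (F i.1).R e x v ∧ PVal (F := F i.1) (V i.1) χ v} := by
      symm
      refine Cardinal.mk_congr (Equiv.ofBijective
        (fun v => ⟨⟨i, v.1⟩, ⟨v.1, v.2.1, rfl⟩, (pval_dun F' hι _ χ i v.1).2 v.2.2⟩) ⟨?_, ?_⟩)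
      · rintro ⟨v, hv⟩ ⟨u, hu⟩ h
        have h' := congrArg Subtype.val h
        have := eq_of_heq (Sigma.mk.inj h').2
        exact Subtype.ext this
      · rintro ⟨_, ⟨v, hv, rfl⟩, h⟩
        exact ⟨⟨v, hv, (pval_dun F' hι _ χ i v).1 h⟩, rfl⟩
    rw [this]
    exact hV i.1 x χ
  · rintro m x _ ⟨v, _, rfl⟩
    rfl
  · intro ψ hψ α
    refine ⟨⟨(⟨ψ, hψ⟩, α), w ⟨ψ, hψ⟩⟩, rfl, ?_⟩
    rw [pval_dun]
    exact hw ⟨ψ, hψ⟩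

/-! ### labelled components -/

abbrev Lab : Type := Option (Finset (Finset (PF OC)) × (Bool → ℕ))

open Classical in
noncomputable def cnt (κ : Cardinal.{0}) : Lab → Finset (PF OC) → Cardinal.{0}
  | none, t => if t = ∅ then κ else 0
  | some (q, _), t => if t ∈ q then κ else 0

structure Comp (j : Bool) (s : PF OC → ℕ) (Φ : Finset (PF OC))
    (Q : Finset (Finset (Finset (PF OC)))) (Lj : Set (PF OU)) (κ : Cardinal.{0})
    (F : KFrame OU) (V : ℕ → F.W → Prop) (lab : F.W → Lab) (ty : F.W → Finset (PF OC)) : Prop where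
  fr : FrameFor F Lj
  eqv : Equivalence (F.R none)
  labE : ∀ w v, F.R none w v → lab w = lab v
  count : ∀ w t, Cardinal.mk {v // F.R none w v ∧ ty v = t} = cnt κ (lab w) t
  ex : ∀ a, (∃ w, lab w = a) ↔ a = none ∨ ∃ q ∈ Q, ∃ k, a = some (q, k)
  tyH : ∀ w q k, lab w = some (q, k) → ∀ χ ∈ Φ, (χ ∈ ty w ↔ PVal (F := F) V (sur j s χ) w)
  step : ∀ w q k, lab w = some (q, k) → 1 ≤ k j → ∀ v, F.R (some ()) w v →
    ∃ q' k', lab v = some (q', k') ∧ k j ≤ k' j + 1 ∧ k' (!j) = k (!j)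
  start : ∀ ψ (n : Bool → ℕ), PF.imp (boxIELe (n j) (sur j s (QhatP none Q))) ψ ∉ Lj →
    ∃ w q, lab w = some (q, n) ∧ ¬ PVal (F := F) V ψ w

theorem comp_exists (j : Bool) (s : PF OC → ℕ) (Φ : Finset (PF OC))
    (Q : Finset (Finset (Finset (PF OC)))) (hT : ∀ q ∈ Q, ∀ t ∈ q, IsTypeP Φ t)
    (Lj : Set (PF OU)) (hS : ContainsS5 Lj none)
    (κ : Cardinal.{0}) (hκ : κ ≠ 0)
    (hH : ∀ φ ∉ Lj, ∃ F : KFrame OU, FrameFor F Lj ∧ ∃ V : ℕ → F.W → Prop,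
      EHomog none V κ ∧ ∃ w, ¬ PVal (F := F) V φ w)
    (ψ₀ : PF OU) (hψ₀ : ψ₀ ∉ Lj)
    (hcon : ∀ q ∈ Q, ∀ n, PF.imp (boxIELe n (sur j s (QhatP none Q)))
      (sur j s (.neg (qhatP none q))) ∉ Lj) :
    ∃ F V lab ty, Comp j s Φ Q Lj κ F V lab ty := by
  classical
  obtain ⟨F, hF, V, hV, a, ha, hex⟩ := univ_model (A := Option (Bool → ℕ)) ⟨none⟩ hH hψ₀
  have hE := frame_equiv hS hF
  have S := sur_sem j s V hE
  set H : PF OC → F.W → Prop := fun χ w => PVal (F := F) V (sur j s χ) w with hHdef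
  let P : F.W → ℕ → Prop := fun w k => PVal (F := F) V (boxIELe k (sur j s (QhatP none Q))) w
  have hP0 : ∀ w k, P w k → qs Φ (F.R none) H w ∈ Q := by
    intro w k h
    have := (boxIELe_iff V _ _ w).1 h 0 (Nat.zero_le _)
    exact (S.Qhat_iff hT w).1 this
  have hP00 : ∀ w, qs Φ (F.R none) H w ∈ Q → P w 0 := by
    intro w h
    exact (S.Qhat_iff hT w).2 h
  have hPinv : ∀ w v k, F.R none w v → P w k → P v k := by
    intro w v k hR h
    refine boxIELe_inv V hE k _ ?_ hR h
    intro w v hR h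
    have := (S.Qhat_iff hT w).1 h
    rw [S.qs_eq hR] at this
    exact (S.Qhat_iff hT v).2 this
  have hPeq : ∀ w v, F.R none w v → P w = P v := by
    intro w v hR
    ext k
    exact ⟨hPinv w v k hR, hPinv v w k (hE.symm hR)⟩
  let lab : F.W → Lab := fun w => (a w).bind fun n =>
    if qs Φ (F.R none) H w ∈ Q then
      some (qs Φ (F.R none) H w, Function.update n j (Nat.findGreatest (P w) (n j))) else none
  have lab_some : ∀ w q k, lab w = some (q, k) ↔ ∃ n, a w = some n ∧ q ∈ Q ∧
      qs Φ (F.R none) H w = q ∧ Function.update n j (Nat.findGreatest (P w) (n j)) = k := by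
    intro w q k
    simp only [lab, Option.bind_eq_some_iff]
    constructor
    · rintro ⟨n, h1, h2⟩
      split_ifs at h2 with h3
      simp only [Option.some.injEq, Prod.mk.injEq] at h2
      refine ⟨n, h1, ?_, h2⟩
      rw [← h2.1]; exact h3
    · rintro ⟨n, h1, h2, rfl, h4⟩
      refine ⟨n, h1, ?_⟩
      rw [if_pos h2, h4]
  have lab_full : ∀ w n, a w = some n → P w (n j) → lab w = some (qs Φ (F.R none) H w, n) := by
    intro w n h1 h2
    rw [lab_some]
    refine ⟨n, h1, hP0 _ _ h2, rfl, ?_⟩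
    rw [Function.update_eq_self_iff]
    refine le_antisymm (Nat.findGreatest_le _) (Nat.le_findGreatest le_rfl h2)
  let ty : F.W → Finset (PF OC) := fun w => if lab w = none then ∅ else tp Φ H w
  have labE : ∀ w v, F.R none w v → lab w = lab v := by
    intro w v hR
    simp only [lab]
    rw [ha _ _ _ hR, S.qs_eq hR, hPeq w v hR]
  refine ⟨F, V, lab, ty, hF, hE, labE, ?_, ?_, ?_, ?_, ?_⟩
  · intro w t
    have hom : ∀ ψ : PF OC, (∀ v, F.R none w v → (ty v = t ↔ H ψ v)) →
        (∃ v, F.R none w v ∧ ty v = t) →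
        Cardinal.mk {v // F.R none w v ∧ ty v = t} = κ := by
      rintro ψ h1 ⟨v, hv⟩
      have : Cardinal.mk {v // F.R none w v ∧ ty v = t} =
          Cardinal.mk {v // F.R none w v ∧ PVal (F := F) V (sur j s ψ) v} := by
        refine Cardinal.mk_congr (Equiv.subtypeEquivRight fun v => ?_)
        exact and_congr_right (h1 v)
      rcases hV w (sur j s ψ) with h | h
      · exfalso
        rw [← this, Cardinal.mk_eq_zero_iff] at h
        exact h.false ⟨v, hv⟩
      · rw [this, h]
    have emp : (∀ v, F.R none w v → ty v ≠ t) →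
        Cardinal.mk {v // F.R none w v ∧ ty v = t} = 0 := by
      intro h
      rw [Cardinal.mk_eq_zero_iff]
      exact ⟨fun v => h v.1 v.2.1 v.2.2⟩
    rcases hlab : lab w with _ | ⟨q, k⟩
    · have h0 : ∀ v, F.R none w v → ty v = ∅ := by
        intro v hv
        simp only [ty]
        rw [if_pos]
        rw [← labE w v hv, hlab]
      simp only [cnt]
      split_ifs with ht
      · subst ht
        refine hom (PF.imp (.atom 0) (.atom 0)) ?_ ⟨w, hE.refl w, h0 w (hE.refl w)⟩
        intro v hv
        simp only [h0 v hv, true_iff]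
        simp only [PF.imp, S.neg, S.and]
        tauto
      · exact emp (fun v hv h => ht (h ▸ h0 v hv))
    · obtain ⟨n, h1, h2, h3, h4⟩ := (lab_some _ _ _).1 hlab
      have h0 : ∀ v, F.R none w v → ty v = tp Φ H v := by
        intro v hv
        simp only [ty]
        rw [if_neg]
        rw [← labE w v hv, hlab]
        simp
      simp only [cnt]
      split_ifs with ht
      · refine hom (typeConjP t) ?_ ?_
        · intro v hv
          rw [h0 v hv, S.conj, S.type_iff (hT q h2 t ht)]
        · rw [← h3] at ht
          obtain ⟨v, hv, h5⟩ := mem_qs.1 ht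
          exact ⟨v, hv, (h0 v hv).trans h5⟩
      · refine emp (fun v hv h => ht ?_)
        rw [← h3]
        exact mem_qs.2 ⟨v, hv, (h0 v hv).symm.trans h⟩
  · intro c
    constructor
    · rintro ⟨w, rfl⟩
      rcases hlab : lab w with _ | ⟨q, k⟩
      · exact Or.inl rfl
      · obtain ⟨n, h1, h2, h3, h4⟩ := (lab_some _ _ _).1 hlab
        exact Or.inr ⟨q, h2, k, rfl⟩
    · rintro (rfl | ⟨q, hq, k, rfl⟩)
      · obtain ⟨w, hw, -⟩ := hex ψ₀ hψ₀ none
        refine ⟨w, ?_⟩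
        simp only [lab, hw, Option.bind_none]
      · obtain ⟨w, hw, h1⟩ := hex _ (hcon q hq (k j)) (some k)
        rw [pval_imp] at h1
        push Not at h1
        refine ⟨w, ?_⟩
        rw [lab_full w k hw h1.1]
        have h2 : ¬ H (.neg (qhatP none q)) w := h1.2
        rw [S.neg, not_not, S.qhat_iff (hT q hq)] at h2
        rw [h2]
  · intro w q k h χ hχ
    simp only [ty, h]
    rw [if_neg (by simp)]
    exact S.mem_tp_iff hχ
  · intro w q k h hk v hR
    obtain ⟨n, h1, h2, h3, rfl⟩ := (lab_some _ _ _).1 h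
    simp only [Function.update_self] at hk ⊢
    set g := Nat.findGreatest (P w) (n j) with hg
    have hPg : P w g := Nat.findGreatest_of_ne_zero rfl (by omega)
    obtain ⟨g', hg'⟩ : ∃ g', g = g' + 1 := ⟨g - 1, by omega⟩
    rw [hg'] at hPg
    have hPv : P v g' := boxIELe_step V hE g' _ hPg hR
    refine ⟨qs Φ (F.R none) H v, Function.update n j (Nat.findGreatest (P v) (n j)), ?_, ?_, ?_⟩
    · rw [lab_some]
      exact ⟨n, (ha _ _ _ hR) ▸ h1, hP0 _ _ hPv, rfl, rfl⟩
    · rw [Function.update_self, hg']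
      have : g ≤ n j := Nat.findGreatest_le _
      have := Nat.le_findGreatest (n := n j) (by omega) hPv
      omega
    · have : (!j) ≠ j := by cases j <;> simp
      rw [Function.update_of_ne this, Function.update_of_ne this]
  · intro ψ n h
    obtain ⟨w, hw, h1⟩ := hex _ h (some n)
    rw [pval_imp] at h1
    push Not at h1
    exact ⟨w, _, lab_full w n hw h1.1, h1.2⟩

/-! ### the glued model -/

theorem glued (s : PF OC → ℕ) (Φ : Finset (PF OC)) (hΦ : SubClosed Φ)
    (Q : Finset (Finset (Finset (PF OC)))) (LL : Bool → Set (PF OU)) (κ : Cardinal.{0})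
    (F : Bool → KFrame OU) (V : ∀ j, ℕ → (F j).W → Prop) (lab : ∀ j, (F j).W → Lab)
    (ty : ∀ j, (F j).W → Finset (PF OC))
    (C : ∀ j, Comp j s Φ Q (LL j) κ (F j) (V j) (lab j) (ty j))
    (i : Bool) (φ : PF OC)
    (hφ : ∀ χ, PF.box (op (!i)) χ ∈ φ.sub → PF.box (op (!i)) χ ∈ Φ)
    (h3 : PF.imp (boxIELe (mdd i φ) (sur i s (QhatP none Q))) (sur i s φ) ∉ LL i) :
    ∃ G : KFrame OC, FrameFor G (fusionE (LL true) (LL false)) ∧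
      ∃ (U : ℕ → G.W → Prop) (w : G.W), ¬ PVal (F := G) U φ w := by
  obtain ⟨I, ⟨i0⟩, e, he1, he2⟩ := glue ⟨_, (C true).eqv⟩ ⟨_, (C false).eqv⟩ (lab true) (lab false)
    (ty true) (ty false) (C true).labE (C false).labE (cnt κ) (C true).count (C false).count
    (fun a => ((C true).ex a).trans ((C false).ex a).symm)
  let G : KFrame OC := ⟨(F true).W × I, ⟨((F true).ne.some, i0)⟩, fun m x y => match m with
    | none => (F true).R none x.1 y.1 ∧ x.2 = y.2
    | some (Sum.inl _) => (F true).R (some ()) x.1 y.1 ∧ x.2 = y.2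
    | some (Sum.inr _) => (F false).R (some ()) (e x).1 (e y).1 ∧ (e x).2 = (e y).2⟩
  let π : ∀ j, G.W ≃ (F j).W × I := fun j => match j with
    | true => Equiv.refl _
    | false => e
  have hπ : ∀ j m x y, G.R (emb j m) x y ↔
      (F j).R m (π j x).1 (π j y).1 ∧ (π j x).2 = (π j y).2 := by
    intro j m x y
    rcases j with _ | _ <;> rcases m with _ | ⟨⟨⟩⟩
    · exact he1 x y
    · rfl
    · rfl
    · rfl
  have hlab : ∀ j j' x, lab j (π j x).1 = lab j' (π j' x).1 := by
    intro j j' x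
    rcases j with _ | _ <;> rcases j' with _ | _
    · rfl
    · exact (he2 x).1.symm
    · exact (he2 x).1
    · rfl
  have hty : ∀ j j' x, ty j (π j x).1 = ty j' (π j' x).1 := by
    intro j j' x
    rcases j with _ | _ <;> rcases j' with _ | _
    · rfl
    · exact (he2 x).2.symm
    · exact (he2 x).2
    · rfl
  -- transfer of boxes
  have hbox : ∀ j m x (p : (F j).W → Prop), (∀ y, G.R (emb j m) x y → p (π j y).1) ↔
      ∀ v, (F j).R m (π j x).1 v → p v := by
    intro j m x p
    constructor
    · intro h v hv
      have := h ((π j).symm (v, (π j x).2)) ((hπ _ _ _ _).2 (by simpa using hv))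
      simpa using this
    · intro h y hy
      exact h _ ((hπ _ _ _ _).1 hy).1
  have hstep : ∀ j x y q k, lab i (π i x).1 = some (q, k) → 1 ≤ k j → G.R (op j) x y →
      ∃ q' k', lab i (π i y).1 = some (q', k') ∧ k j ≤ k' j + 1 ∧ k' (!j) = k (!j) := by
    intro j x y q k h1 h2 h3
    rw [hlab i j] at h1 ⊢
    rw [← emb_some j (), hπ] at h3
    exact (C j).step _ _ _ h1 h2 _ h3.1
  have hstepE : ∀ x y, G.R none x y → lab i (π i x).1 = lab i (π i y).1 := by
    intro x y h
    rw [← emb_none i, hπ] at h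
    exact (C i).labE _ _ h.1
  have hlev : ∀ j (k k' : Bool → ℕ) χ, (∀ j', mdd j' (.box (op j) χ) ≤ k j') → k j ≤ k' j + 1 →
      k' (!j) = k (!j) → ∀ j', mdd j' χ ≤ k' j' := by
    intro j k k' χ h1 h2 h3 j'
    by_cases hj : j' = j
    · subst hj
      have := h1 j'
      rw [mdd_box] at this
      omega
    · have : j' = !j := by cases j <;> cases j' <;> simp_all
      subst this
      rw [h3]
      exact (mdd_box_le _ _ _).trans (h1 _)
  let U : ℕ → G.W → Prop := fun n x => V i n (π i x).1
  have truth : ∀ χ ∈ Φ, ∀ x q k, lab i (π i x).1 = some (q, k) → (∀ j, mdd j χ ≤ k j) →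
      ∀ j, (PVal (F := G) U χ x ↔ PVal (F := F j) (V j) (sur j s χ) (π j x).1) := by
    have indep : ∀ χ ∈ Φ, ∀ x q k, lab i (π i x).1 = some (q, k) → ∀ j j',
        (PVal (F := F j) (V j) (sur j s χ) (π j x).1 ↔
          PVal (F := F j') (V j') (sur j' s χ) (π j' x).1) := by
      intro χ hχ x q k h j j'
      rw [← (C j).tyH _ q k (by rw [← h]; exact hlab _ _ _) χ hχ,
        ← (C j').tyH _ q k (by rw [← h]; exact hlab _ _ _) χ hχ, hty j j']
    intro χ
    induction χ with
    | atom n =>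
      intro hχ x q k h1 h2 j
      rw [indep _ hχ x q k h1 j i, sur_atom]
      rfl
    | neg χ ih =>
      intro hχ x q k h1 h2 j
      simp only [sur_neg, PVal]
      rw [ih (hΦ.neg _ hχ) x q k h1 (fun j => by simpa only [mdd_neg] using h2 j) j]
    | and χ ψ ih1 ih2 =>
      intro hχ x q k h1 h2 j
      simp only [sur_and, PVal]
      rw [ih1 (hΦ.and _ _ hχ).1 x q k h1 (fun j => by
            have := h2 j; rw [mdd_and] at this; exact (le_max_left _ _).trans this) j,
        ih2 (hΦ.and _ _ hχ).2 x q k h1 (fun j => by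
            have := h2 j; rw [mdd_and] at this; exact (le_max_right _ _).trans this) j]
    | box m χ ih =>
      intro hχ x q k h1 h2 j
      have ih' := ih (hΦ.box _ _ hχ)
      rcases op_cases true m with rfl | hm
      · simp only [sur_boxE, PVal]
        rw [← hbox j none x, emb_none]
        refine forall₂_congr fun y hy => ih' y q k ?_ ?_ j
        · rw [← hstepE x y hy, h1]
        · exact fun j' => (mdd_box_le _ _ _).trans (h2 j')
      · obtain ⟨j', rfl⟩ : ∃ j', m = op j' := by
          rcases hm with h | h
          · exact ⟨_, h⟩
          · exact ⟨_, h⟩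
        rw [indep _ hχ x q k h1 j j']
        simp only [sur_box, PVal]
        rw [← hbox j' (some ()) x, emb_some]
        refine forall₂_congr fun y hy => ?_
        have hk : 1 ≤ k j' := by
          have := h2 j'
          rw [mdd_box] at this
          omega
        obtain ⟨q', k', a1, a2, a3⟩ := hstep j' x y q k h1 hk hy
        exact ih' y q' k' a1 (hlev j' k k' χ h2 a2 a3) j'
  have truth' : ∀ χ, (∀ θ, PF.box (op (!i)) θ ∈ χ.sub → PF.box (op (!i)) θ ∈ Φ) →
      ∀ x q k, lab i (π i x).1 = some (q, k) → (∀ j, mdd j χ ≤ k j) →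
      (PVal (F := G) U χ x ↔ PVal (F := F i) (V i) (sur i s χ) (π i x).1) := by
    intro χ
    induction χ with
    | atom n =>
      intro hχ x q k h1 h2
      rw [sur_atom]
      rfl
    | neg χ ih =>
      intro hχ x q k h1 h2
      simp only [sur_neg, PVal]
      rw [ih (fun θ h => hχ θ (by simp [PF.sub, h])) x q k h1
        (fun j => by simpa only [mdd_neg] using h2 j)]
    | and χ ψ ih1 ih2 =>
      intro hχ x q k h1 h2
      simp only [sur_and, PVal]
      rw [ih1 (fun θ h => hχ θ (by simp [PF.sub, h])) x q k h1 (fun j => by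
            have := h2 j; rw [mdd_and] at this; exact (le_max_left _ _).trans this),
        ih2 (fun θ h => hχ θ (by simp [PF.sub, h])) x q k h1 (fun j => by
            have := h2 j; rw [mdd_and] at this; exact (le_max_right _ _).trans this)]
    | box m χ ih =>
      intro hχ x q k h1 h2
      have ih' := ih (fun θ h => hχ θ (by simp [PF.sub, h]))
      rcases op_cases i m with rfl | rfl | rfl
      · simp only [sur_boxE, PVal]
        rw [← hbox i none x, emb_none]
        refine forall₂_congr fun y hy => ih' y q k ?_ ?_
        · rw [← hstepE x y hy, h1]
        · exact fun j' => (mdd_box_le _ _ _).trans (h2 j')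
      · simp only [sur_box, PVal]
        rw [← hbox i (some ()) x, emb_some]
        refine forall₂_congr fun y hy => ?_
        have hk : 1 ≤ k i := by
          have := h2 i
          rw [mdd_box] at this
          omega
        obtain ⟨q', k', a1, a2, a3⟩ := hstep i x y q k h1 hk hy
        exact ih' y q' k' a1 (hlev i k k' χ h2 a2 a3)
      · exact truth _ (hχ χ (by simp [PF.sub])) x q k h1 h2 i
  refine ⟨G, fusion_frame _ _ G ?_ ?_, U, ?_⟩
  · exact frameFor_part (C true).fr (π true) (hπ true)
  · exact frameFor_part (C false).fr (π false) (hπ false)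
  · obtain ⟨w, q, hw, hw2⟩ := (C i).start (sur i s φ) (fun j => mdd j φ) h3
    refine ⟨(π i).symm (w, i0), ?_⟩
    rw [truth' φ hφ _ q (fun j => mdd j φ) (by simpa using hw) (fun j => le_rfl)]
    simpa using hw2

/-! ### bookkeeping about subformulas -/

theorem self_mem_sub (χ : PF OC) : χ ∈ χ.sub := by
  cases χ <;> simp [PF.sub]

theorem sub_trans {χ ψ : PF OC} (h : χ ∈ ψ.sub) : χ.sub ⊆ ψ.sub := by
  induction ψ with
  | atom n => simp only [PF.sub, Finset.mem_singleton] at h; subst h; rfl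
  | neg ψ ih =>
    simp only [PF.sub, Finset.mem_insert] at h
    rcases h with rfl | h
    · rfl
    · exact (ih h).trans (by simp [PF.sub])
  | and ψ θ ih1 ih2 =>
    simp only [PF.sub, Finset.mem_insert, Finset.mem_union] at h
    rcases h with rfl | h | h
    · rfl
    · exact (ih1 h).trans (fun x hx => by simp [PF.sub, hx])
    · exact (ih2 h).trans (fun x hx => by simp [PF.sub, hx])
  | box m ψ ih =>
    simp only [PF.sub, Finset.mem_insert] at h
    rcases h with rfl | h
    · rfl
    · exact (ih h).trans (by simp [PF.sub])

theorem sub_atoms {χ ψ : PF OC} (h : χ ∈ ψ.sub) : χ.atoms ⊆ ψ.atoms := by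
  induction ψ with
  | atom n => simp only [PF.sub, Finset.mem_singleton] at h; subst h; rfl
  | neg ψ ih =>
    simp only [PF.sub, Finset.mem_insert] at h
    rcases h with rfl | h
    · rfl
    · exact ih h
  | and ψ θ ih1 ih2 =>
    simp only [PF.sub, Finset.mem_insert, Finset.mem_union] at h
    rcases h with rfl | h | h
    · rfl
    · exact (ih1 h).trans (fun x hx => by simp [PF.atoms, hx])
    · exact (ih2 h).trans (fun x hx => by simp [PF.atoms, hx])
  | box m ψ ih =>
    simp only [PF.sub, Finset.mem_insert] at h
    rcases h with rfl | h
    · rfl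
    · exact ih h

theorem subClosed_of {Φ : Finset (PF OC)} (h : ∀ χ ∈ Φ, χ.sub ⊆ Φ) : SubClosed Φ where
  neg χ hχ := h _ hχ (by simp [PF.sub, self_mem_sub])
  and χ ψ hχ := ⟨h _ hχ (by simp [PF.sub, self_mem_sub]), h _ hχ (by simp [PF.sub, self_mem_sub])⟩
  box m χ hχ := h _ hχ (by simp [PF.sub, self_mem_sub])

def Theta : Bool → PF OC → Finset (PF OC)
  | true => Theta1P
  | false => Theta2P

noncomputable def Qset : Bool → Set (PF OC) → PF OC → Finset (Finset (Finset (PF OC)))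
  | true => Qset1P
  | false => Qset2P

theorem mem_Theta (i : Bool) (φ χ : PF OC) : χ ∈ Theta i φ ↔
    (χ ∈ φ.sub ∧ ∃ n, χ = .atom n) ∨ ∃ ψ, PF.box (op (!i)) ψ ∈ φ.sub ∧
      χ ∈ (PF.box (op (!i)) ψ).sub := by
  have a : ∀ χ : PF OC, (match χ with | .atom _ => true | _ => false) = true ↔
      ∃ n, χ = .atom n := by
    intro χ; cases χ <;> simp
  have b1 : ∀ χ : PF OC, (match χ with | .box (some (Sum.inr _)) _ => true | _ => false) = true ↔
      ∃ ψ, χ = .box (some (Sum.inr ())) ψ := by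
    intro χ; rcases χ with _ | _ | _ | ⟨_ | ⟨⟨⟩⟩ | ⟨⟨⟩⟩, _⟩ <;> simp
  have b2 : ∀ χ : PF OC, (match χ with | .box (some (Sum.inl _)) _ => true | _ => false) = true ↔
      ∃ ψ, χ = .box (some (Sum.inl ())) ψ := by
    intro χ; rcases χ with _ | _ | _ | ⟨_ | ⟨⟨⟩⟩ | ⟨⟨⟩⟩, _⟩ <;> simp
  cases i
  · simp only [Theta, Theta2P, Finset.mem_union, Finset.mem_filter, Finset.mem_biUnion, a, b2,
      Bool.not_false, op]
    refine or_congr Iff.rfl ⟨?_, ?_⟩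
    · rintro ⟨_, ⟨h1, ψ, rfl⟩, h⟩
      exact ⟨ψ, h1, h⟩
    · rintro ⟨ψ, h1, h⟩
      exact ⟨_, ⟨h1, ψ, rfl⟩, h⟩
  · simp only [Theta, Theta1P, Finset.mem_union, Finset.mem_filter, Finset.mem_biUnion, a, b1,
      Bool.not_true, op]
    refine or_congr Iff.rfl ⟨?_, ?_⟩
    · rintro ⟨_, ⟨h1, ψ, rfl⟩, h⟩
      exact ⟨ψ, h1, h⟩
    · rintro ⟨ψ, h1, h⟩
      exact ⟨_, ⟨h1, ψ, rfl⟩, h⟩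

theorem Theta_sub (i : Bool) (φ χ : PF OC) (h : χ ∈ Theta i φ) : χ ∈ φ.sub := by
  rcases (mem_Theta _ _ _).1 h with h | ⟨ψ, h1, h2⟩
  · exact h.1
  · exact sub_trans h1 h2

theorem Theta_closed (i : Bool) (φ : PF OC) : SubClosed (Theta i φ) := by
  apply subClosed_of
  intro χ hχ θ hθ
  rw [mem_Theta] at hχ ⊢
  rcases hχ with ⟨h, n, rfl⟩ | ⟨ψ, h1, h2⟩
  · simp only [PF.sub, Finset.mem_singleton] at hθ
    exact Or.inl ⟨hθ ▸ h, n, hθ⟩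
  · exact Or.inr ⟨ψ, h1, sub_trans h2 hθ⟩

theorem Qset_spec (i : Bool) (L : Set (PF OC)) (φ : PF OC) :
    QSpec L (Theta i φ) (Qset i L φ) := by
  have key : ∀ (Φ : Finset (PF OC)) q, IsQuasistateP none Φ q →
      q ⊆ (Φ ∪ Φ.image PF.neg).powerset := by
    intro Φ q hq t ht
    rw [Finset.mem_powerset]
    intro χ hχ
    rcases (hq.2.1 t ht).1 χ hχ with h | ⟨ψ, h, rfl⟩
    · exact Finset.mem_union_left _ h
    · exact Finset.mem_union_right _ (Finset.mem_image_of_mem _ h)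
  intro q
  cases i
  · simp only [Qset, Qset2P, Theta, Finset.mem_filter]
    exact ⟨fun h => h.2, fun h => ⟨Finset.mem_powerset.2 (key _ q h.1), h⟩⟩
  · simp only [Qset, Qset1P, Theta, Finset.mem_filter]
    exact ⟨fun h => h.2, fun h => ⟨Finset.mem_powerset.2 (key _ q h.1), h⟩⟩

theorem criterion (LL : Bool → Set (PF OU)) 
    (hS : ∀ j, ContainsS5 (LL j) none) (hH : ∀ j, AdmitsEHomog none (LL j))
    (i : Bool) (φ : PF OC) (s : PF OC → ℕ) (hs : Function.Injective s)
    (hfresh : ∀ θ, s θ ∉ φ.atoms) (L : Set (PF OC)) (hLL : L = fusionE (LL true) (LL false)) :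
    (φ ∉ L ↔ ∃ F : KFrame OC, FrameFor F L ∧
            ∃ (V : ℕ → F.W → Prop) (w : F.W), ¬ PVal (F := F) V φ w) ∧
    (φ ∉ L ↔ PF.imp (boxIELe (mdd i φ) (sur i s (QhatP none (Qset i L φ)))) (sur i s φ) ∉ LL i) := by
  have hL : IsPLogic L := hLL ▸ fusion_logic _ _
  have hj : ∀ j, PF.mapOp (emb j) '' LL j ⊆ L := by
    intro j
    rw [hLL]
    cases j
    · exact fun χ hχ L' hL' => hL'.2.2 hχ
    · exact fun χ hχ L' hL' => hL'.2.1 hχ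
  have hS0 : ContainsS5 L none := by
    obtain ⟨a, b, c⟩ := hS true
    exact ⟨hj true ⟨_, a, rfl⟩, hj true ⟨_, b, rfl⟩, hj true ⟨_, c, rfl⟩⟩
  set Q := Qset i L φ
  have hQ : QSpec L (Theta i φ) Q := Qset_spec i L φ
  have hΦ := Theta_closed i φ
  have hT : ∀ q ∈ Q, ∀ t ∈ q, IsTypeP (Theta i φ) t := fun q hq => ((hQ q).1 hq).1.2.1
  have hfr : ∀ χ ∈ Theta i φ, ∀ n ∈ χ.atoms, ∀ θ, s θ ≠ n := by
    rintro χ hχ n hn θ rfl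
    exact hfresh θ (sub_atoms (Theta_sub i φ χ hχ) hn)
  have h13 : φ ∉ L → PF.imp (boxIELe (mdd i φ) (sur i s (QhatP none Q))) (sur i s φ) ∉ LL i := by
    intro h
    refine notin_comp i hL hS0 (hj i) s hs hΦ hfr hQ h (Or.inl ?_) _
    rintro n hn θ rfl
    exact hfresh θ hn
  have h21 : (∃ F : KFrame OC, FrameFor F L ∧
            ∃ (V : ℕ → F.W → Prop) (w : F.W), ¬ PVal (F := F) V φ w) → φ ∉ L := by
    rintro ⟨F, hF, V, w, hw⟩ hc
    exact hw (hF φ hc V w)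
  have hcon : ∀ j, ∀ q ∈ Q, ∀ n, PF.imp (boxIELe n (sur j s (QhatP none Q)))
      (sur j s (.neg (qhatP none q))) ∉ LL j := by
    intro j q hq n
    exact notin_comp j hL hS0 (hj j) s hs hΦ hfr hQ ((hQ q).1 hq).2 (Or.inr ⟨q, hq, rfl⟩) n
  have h32 : PF.imp (boxIELe (mdd i φ) (sur i s (QhatP none Q))) (sur i s φ) ∉ LL i →
      ∃ F : KFrame OC, FrameFor F L ∧
            ∃ (V : ℕ → F.W → Prop) (w : F.W), ¬ PVal (F := F) V φ w := by
    intro h3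
    choose κ hκ0 hκ using hH
    let κ' := max (κ true) (κ false)
    have hle : ∀ j, κ j ≤ κ' := by
      intro j; cases j
      · exact le_max_right _ _
      · exact le_max_left _ _
    have hne : κ' ≠ 0 := by
      have := (hκ0 true).trans (hle true)
      exact (lt_of_lt_of_le Cardinal.aleph0_pos this).ne'
    obtain ⟨q, hq⟩ : ∃ q, q ∈ Q := by
      obtain ⟨F, hF, V, -, w, hw⟩ := hκ i κ' (hle i) _ h3
      rw [pval_imp] at hw
      push Not at hw
      have := (boxIELe_iff V _ _ w).1 hw.1 0 (Nat.zero_le _)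
      exact ⟨_, ((sur_sem i s V (frame_equiv (hS i) hF)).Qhat_iff hT w).1 this⟩
    choose F V lab ty C using fun j => comp_exists j s (Theta i φ) Q hT (LL j) (hS j) κ' hne
      (hκ j κ' (hle j)) _ (hcon j q hq 0) (hcon j)
    rw [hLL]
    refine glued s (Theta i φ) hΦ Q LL κ' F V lab ty C i φ ?_ h3
    intro χ hχ
    rw [mem_Theta]
    exact Or.inr ⟨χ, hχ, self_mem_sub _⟩
  exact ⟨⟨fun h => h32 (h13 h), h21⟩, ⟨h13, fun h => h21 (h32 h)⟩⟩

/-- The quasistate criterion for derivability in the fusion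
`L1 ⊗_E L2` of two bimodal logics sharing the S5 operator `□_E` (designated by
`none`) and admitting `E`-homogeneous models: for each `i ∈ {1,2}` with
`adp(φ) = adpⁱ(φ)`, conditions (i), (ii), (iii) are equivalent. -/
theorem local_quasistate_criterionP (L1 L2 : Set (PF OU))
    (h1 : IsPLogic L1) (h2 : IsPLogic L2)
    (hS1 : ContainsS5 L1 none) (hS2 : ContainsS5 L2 none)
    (hH1 : AdmitsEHomog none L1) (hH2 : AdmitsEHomog none L2)
    (φ : PF OC) (s : PF OC → ℕ) (hs : Function.Injective s)
    (hfresh : ∀ θ, s θ ∉ φ.atoms) :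
    -- case i = 1
    (adpP φ = adp1P φ →
      ((φ ∉ fusionE L1 L2 ↔
          ∃ F : KFrame OC, FrameFor F (fusionE L1 L2) ∧
            ∃ (V : ℕ → F.W → Prop) (w : F.W), ¬ PVal (F := F) V φ w) ∧
       (φ ∉ fusionE L1 L2 ↔
          PF.imp (boxIELe (md1P φ) (sur1P s (QhatP none (Qset1P (fusionE L1 L2) φ))))
            (sur1P s φ) ∉ L1))) ∧
    -- case i = 2
    (adpP φ = adp2P φ →
      ((φ ∉ fusionE L1 L2 ↔
          ∃ F : KFrame OC, FrameFor F (fusionE L1 L2) ∧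
            ∃ (V : ℕ → F.W → Prop) (w : F.W), ¬ PVal (F := F) V φ w) ∧
       (φ ∉ fusionE L1 L2 ↔
          PF.imp (boxIELe (md2P φ) (sur2P s (QhatP none (Qset2P (fusionE L1 L2) φ))))
            (sur2P s φ) ∉ L2))) := by
  have key := fun i L => criterion (fun j => match j with | true => L1 | false => L2)
    (fun j => match j with | true => hS1 | false => hS2)
    (fun j => match j with | true => hH1 | false => hH2) i φ s hs hfresh L
  exact ⟨fun _ => key true _ rfl, fun _ => key false _ rfl⟩

end PropML
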